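/- arXiv:1809.08539 — 2 statements merged into one kernel-verified Lean document; each statement's English description precedes it below -/
import Mathlib

section
/- Fix constants δ₀, ρ̃₀ ∈ (0,1) and set α̃₀ = (1−ρ̃₀)(1−δ₀)²/ρ̃₀ and β̃₀ = (1−ρ̃₀)(1−δ₀)/ρ̃₀. Then there exists a constant C > 0 depending only on (δ₀, ρ̃₀) such that for every n, every centered Gaussian vector X = (X_1,…,X_n) with var(X_i) = 1 for all i and correlation matrix R, and every subset J ⊂ {1,…,n} of cardinality ñ ≥ 2 with R_{ij} ≤ ρ̃₀ for all distinct i, j ∈ J, one has P(max_{1≤i≤n} X_i ≤ δ₀ √(2(1−ρ̃₀)log ñ)) ≤ C · ñ^{−α̃₀} · (log ñ)^{(β̃₀−1)/2}. -/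
open MeasureTheory ProbabilityTheory Real

/-- `X` is a centered Gaussian random vector with standardized entries and
correlation (= covariance) matrix `R`: every linear combination of the
coordinates is a centered real Gaussian with the corresponding variance,
and `R` has unit diagonal. -/
def IsCenteredGaussianVec {Ω : Type*} [MeasureSpace Ω] {n : ℕ}
    (X : Fin n → Ω → ℝ) (R : Matrix (Fin n) (Fin n) ℝ) : Prop :=
  (∀ i, Measurable (X i)) ∧ (∀ i, R i i = 1) ∧
    ∀ a : Fin n → ℝ,
      Measure.map (fun ω => ∑ i, a i * X i ω) (ℙ : Measure Ω) =
        gaussianReal 0 (Real.toNNReal (∑ i, ∑ j, a i * R i j * a j))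


lemma taylor_three {f0 f1 f2 f3 : ℝ → ℝ} {K : ℝ}
    (h0 : ∀ s, HasDerivAt f0 (f1 s) s) (h1 : ∀ s, HasDerivAt f1 (f2 s) s)
    (h2 : ∀ s, HasDerivAt f2 (f3 s) s) (hK : ∀ s, |f3 s| ≤ K) :
    |f0 1 - f0 0 - f1 0 - f2 0 / 2| ≤ K := by
  have hK0 : 0 ≤ K := (abs_nonneg _).trans (hK 0)
  have key : ∀ (p q : ℝ → ℝ), (∀ s, HasDerivAt p (q s) s) →
      (∀ s ∈ Set.Icc (0:ℝ) 1, |q s| ≤ K) → ∀ s ∈ Set.Icc (0:ℝ) 1, |p s - p 0| ≤ K := by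
    intro p q hp hq s hs
    have := norm_image_sub_le_of_norm_deriv_le_segment' (f := p) (f' := q) (C := K) (a := 0) (b := 1)
      (fun x _ => (hp x).hasDerivWithinAt) (fun x hx => hq x ⟨hx.1, hx.2.le⟩) s hs
    rw [Real.norm_eq_abs] at this
    nlinarith [hs.1, hs.2]
  have a2 := key f2 f3 h2 (fun s _ => hK s)
  have a1 := key (fun s => f1 s - s * f2 0) (fun s => f2 s - f2 0)
    (fun s => by
      refine ((h1 s).sub ((hasDerivAt_id s).mul_const (f2 0))).congr_deriv ?_
      simp) a2
  have a0 := key (fun s => f0 s - s * f1 0 - s ^ 2 / 2 * f2 0) (fun s => f1 s - s * f2 0 - f1 0)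
    (fun s => by
      have := ((h0 s).sub ((hasDerivAt_id s).mul_const (f1 0))).sub
        ((((hasDerivAt_id s).pow 2).div_const 2).mul_const (f2 0))
      refine this.congr_deriv ?_
      simp; ring)
    (fun s hs => by simpa using a1 s hs) 1 (by simp)
  convert a0 using 2
  simp; ring

section slep
set_option linter.unusedSectionVars false
variable {ι : Type*} [Fintype ι] [DecidableEq ι]

noncomputable def PP (g : ℝ → ℝ) (k : ι → ℕ) (x : ι → ℝ) : ℝ := ∏ i, iteratedDeriv (k i) g (x i)

lemma hasDerivAt_PP {g : ℝ → ℝ} (hg : ContDiff ℝ (⊤ : ℕ∞) g) (k : ι → ℕ) (x y : ι → ℝ) (s : ℝ) :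
    HasDerivAt (fun s : ℝ => PP g k (x + s • y))
      (∑ i, y i * PP g (k + Pi.single i 1) (x + s • y)) s := by
  unfold PP
  have h : ∀ i ∈ Finset.univ, HasDerivAt (fun s : ℝ => iteratedDeriv (k i) g ((x + s • y) i))
      (iteratedDeriv (k i + 1) g ((x + s • y) i) * y i) s := by
    intro i _
    have h1 : HasDerivAt (iteratedDeriv (k i) g) (iteratedDeriv (k i + 1) g ((x + s • y) i))
        ((x + s • y) i) := by
      rw [iteratedDeriv_succ]
      exact ((hg.differentiable_iteratedDeriv (k i) (by exact_mod_cast ENat.natCast_lt_top _)) _).hasDerivAt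
    have h2 : HasDerivAt (fun s : ℝ => (x + s • y) i) (y i) s := by
      simpa using ((hasDerivAt_id s).mul_const (y i)).const_add (x i)
    exact h1.comp s h2
  have := HasDerivAt.fun_finsetProd h
  refine this.congr_deriv ?_
  refine Finset.sum_congr rfl fun i _ => ?_
  rw [← Finset.mul_prod_erase Finset.univ _ (Finset.mem_univ i)]
  have : ∏ j ∈ Finset.univ.erase i, iteratedDeriv ((k + Pi.single i 1 : ι → ℕ) j) g ((x + s • y) j)
      = ∏ j ∈ Finset.univ.erase i, iteratedDeriv (k j) g ((x + s • y) j) := by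
    refine Finset.prod_congr rfl fun j hj => ?_
    have : j ≠ i := Finset.ne_of_mem_erase hj
    simp [this]
  rw [this]; simp; ring

lemma PP_taylor {g : ℝ → ℝ} (hg : ContDiff ℝ (⊤ : ℕ∞) g) {M : ℝ}
    (hM : ∀ (k : ι → ℕ) (x : ι → ℝ), (∀ i, k i ≤ 3) → |PP g k x| ≤ M) (x y : ι → ℝ) :
    |PP g 0 (x + y) - PP g 0 x - ∑ i, y i * PP g (Pi.single i 1) x
      - (∑ i, ∑ j, y i * y j * PP g (Pi.single i 1 + Pi.single j 1) x) / 2|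
      ≤ M * (∑ i, |y i|) ^ 3 := by
  have := taylor_three (f0 := fun s : ℝ => PP g 0 (x + s • y))
    (f1 := fun s => ∑ i, y i * PP g (0 + Pi.single i 1) (x + s • y))
    (f2 := fun s => ∑ i, y i * ∑ j, y j * PP g (0 + Pi.single i 1 + Pi.single j 1) (x + s • y))
    (f3 := fun s => ∑ i, y i * ∑ j, y j * ∑ l, y l *
      PP g (0 + Pi.single i 1 + Pi.single j 1 + Pi.single l 1) (x + s • y))
    (K := M * (∑ i, |y i|) ^ 3)
    (fun s => hasDerivAt_PP hg _ x y s)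
    (fun s => HasDerivAt.fun_sum fun i _ => (hasDerivAt_PP hg _ x y s).const_mul _)
    (fun s => HasDerivAt.fun_sum fun i _ => (HasDerivAt.fun_sum fun j _ =>
      (hasDerivAt_PP hg _ x y s).const_mul _).const_mul _)
    (fun s => by
      calc _ ≤ ∑ i, |y i| * ∑ j, |y j| * ∑ l, |y l| * M := by
            refine (Finset.abs_sum_le_sum_abs _ _).trans (Finset.sum_le_sum fun i _ => ?_)
            rw [abs_mul]
            refine mul_le_mul_of_nonneg_left ?_ (abs_nonneg _)
            refine (Finset.abs_sum_le_sum_abs _ _).trans (Finset.sum_le_sum fun j _ => ?_)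
            rw [abs_mul]
            refine mul_le_mul_of_nonneg_left ?_ (abs_nonneg _)
            refine (Finset.abs_sum_le_sum_abs _ _).trans (Finset.sum_le_sum fun l _ => ?_)
            rw [abs_mul]
            refine mul_le_mul_of_nonneg_left (hM _ _ fun m => ?_) (abs_nonneg _)
            simp only [Pi.add_apply, Pi.zero_apply, Pi.single_apply]
            split_ifs <;> omega
        _ = _ := by simp only [← Finset.sum_mul]; ring)
  simp only [one_smul, zero_smul, add_zero, zero_add] at this
  convert this using 4
  refine Finset.sum_congr rfl fun i _ => ?_
  rw [Finset.mul_sum]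
  exact Finset.sum_congr rfl fun j _ => by ring

/-- `μ` is a centered Gaussian law with variance function `Q`. -/
def IsG (μ : Measure (ι → ℝ)) (Q : (ι → ℝ) → NNReal) : Prop :=
  ∀ t : ι → ℝ, μ.map (fun x => ∑ i, t i * x i) = gaussianReal 0 (Q t)

lemma dual_eq_sum (L : StrongDual ℝ (ι → ℝ)) (x : ι → ℝ) :
    L x = ∑ i, L (Pi.single i 1) * x i := by
  conv_lhs => rw [pi_eq_sum_univ' x]
  simp only [map_sum, map_smul, smul_eq_mul]
  exact Finset.sum_congr rfl fun i _ => by rw [mul_comm]; 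

lemma IsG.ext {μ ν : Measure (ι → ℝ)} [IsFiniteMeasure μ] [IsFiniteMeasure ν] {Q Q' : (ι → ℝ) → NNReal}
    (hμ : IsG μ Q) (hν : IsG ν Q') (h : ∀ t, Q t = Q' t) : μ = ν := by
  refine Measure.ext_of_charFunDual (funext fun L => ?_)
  rw [charFunDual_eq_charFun_map_one, charFunDual_eq_charFun_map_one]
  have : (fun x => L x) = fun x => ∑ i, L (Pi.single i 1) * x i := funext (dual_eq_sum L)
  have e : μ.map L = ν.map L := by
    change μ.map (fun x => L x) = ν.map (fun x => L x)
    rw [this, hμ, hν, h]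
  rw [e]

lemma IsG.conv {μ ν : Measure (ι → ℝ)} [IsFiniteMeasure μ] [IsFiniteMeasure ν] {Q Q' : (ι → ℝ) → NNReal}
    (hμ : IsG μ Q) (hν : IsG ν Q') : IsG (μ ∗ ν) (fun t => Q t + Q' t) := by
  intro t
  let L : StrongDual ℝ (ι → ℝ) := ∑ i, t i • ContinuousLinearMap.proj i
  have hL : (fun x : ι → ℝ => ∑ i, t i * x i) = L := by ext x; simp [L]
  have h1 := hμ t
  have h2 := hν t
  rw [hL] at h1 h2 ⊢
  rw [Measure.map_conv_continuousLinearMap, h1, h2, gaussianReal_conv_gaussianReal]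
  simp

lemma IsG.smul {μ : Measure (ι → ℝ)} {Q : (ι → ℝ) → NNReal}
    (hμ : IsG μ Q) (c : ℝ) : IsG (μ.map (fun x => c • x)) (fun t => NNReal.mk (c ^ 2) (sq_nonneg _) * Q t) := by
  intro t
  rw [Measure.map_map (by fun_prop) (by fun_prop)]
  have : ((fun x : ι → ℝ => ∑ i, t i * x i) ∘ fun x => c • x) =
    (fun r => c * r) ∘ (fun x => ∑ i, t i * x i) := by
    ext x; simp [Finset.mul_sum]; exact Finset.sum_congr rfl fun i _ => by ring
  rw [this, ← Measure.map_map (by fun_prop) (by fun_prop), hμ, gaussianReal_map_const_mul]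
  simp

lemma IsG.memLp {μ : Measure (ι → ℝ)} {Q : (ι → ℝ) → NNReal}
    (hμ : IsG μ Q) (i : ι) (p : ENNReal) (hp : p ≠ ⊤) : MemLp (fun x => x i) p μ := by
  have h := hμ (Pi.single i 1)
  have e : (fun x : ι → ℝ => ∑ j, (Pi.single i 1 : ι → ℝ) j * x j) = fun x => x i := by
    ext x; simp [Pi.single_apply]
  rw [e] at h
  have h2 := memLp_id_gaussianReal' (μ := 0) (v := Q (Pi.single i 1)) p hp
  rw [← h, memLp_map_measure_iff (by fun_prop) (Measurable.aemeasurable (by fun_prop))] at h2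
  exact h2

lemma IsG.integral_zero {μ : Measure (ι → ℝ)} {Q : (ι → ℝ) → NNReal}
    (hμ : IsG μ Q) (i : ι) : ∫ x, x i ∂μ = 0 := by
  have h := hμ (Pi.single i 1)
  have e : (fun x : ι → ℝ => ∑ j, (Pi.single i 1 : ι → ℝ) j * x j) = fun x => x i := by
    ext x; simp [Pi.single_apply]
  rw [e] at h
  have h2 := integral_id_gaussianReal (μ := 0) (v := Q (Pi.single i 1))
  rw [← h, integral_map (Measurable.aemeasurable (by fun_prop)) (by fun_prop)] at h2
  exact h2

lemma IsG.integral_sq {μ : Measure (ι → ℝ)} {Q : (ι → ℝ) → NNReal}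
    (hμ : IsG μ Q) (t : ι → ℝ) : ∫ x, (∑ i, t i * x i) ^ 2 ∂μ = Q t := by
  have h := hμ t
  have h2 := variance_fun_id_gaussianReal (μ := 0) (v := Q t)
  rw [variance_eq_integral (by fun_prop), integral_id_gaussianReal] at h2
  rw [← h, integral_map (Measurable.aemeasurable (by fun_prop)) (by fun_prop)] at h2
  simpa using h2

lemma IsG.integrable_mul {μ : Measure (ι → ℝ)} {Q : (ι → ℝ) → NNReal}
    (hμ : IsG μ Q) (i j : ι) : Integrable (fun x => x i * x j) μ :=
  (hμ.memLp i 2 (by simp)).integrable_mul (hμ.memLp j 2 (by simp))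

lemma IsG.integrable_cube {μ : Measure (ι → ℝ)} {Q : (ι → ℝ) → NNReal}
    (hμ : IsG μ Q) : Integrable (fun x => (∑ i, |x i|) ^ 3) μ := by
  have h : MemLp (fun x : ι → ℝ => ∑ i, |x i|) 3 μ :=
    memLp_finsetSum _ fun i _ => (hμ.memLp i 3 (by simp)).abs
  have := h.integrable_norm_pow (p := 3) (by simp)
  refine this.congr (Filter.Eventually.of_forall fun x => ?_)
  simp [abs_of_nonneg (Finset.sum_nonneg fun i _ => abs_nonneg (x i))]

lemma continuous_PP {g : ℝ → ℝ} (hg : ContDiff ℝ (⊤ : ℕ∞) g) (k : ι → ℕ) : Continuous (PP (ι := ι) g k) := by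
  unfold PP
  refine continuous_finsetProd _ fun i _ => ?_
  exact (hg.continuous_iteratedDeriv (k i) (by exact_mod_cast le_top)).comp (continuous_apply i)

lemma integrable_PP {g : ℝ → ℝ} (hg : ContDiff ℝ (⊤ : ℕ∞) g) {M : ℝ}
    (hM : ∀ (k : ι → ℕ) (x : ι → ℝ), (∀ i, k i ≤ 3) → |PP g k x| ≤ M)
    (μ : Measure (ι → ℝ)) [IsFiniteMeasure μ] (x : ι → ℝ) (h : ℝ) :
    Integrable (fun y => PP g 0 (x + h • y)) μ := by
  have hc : Continuous (fun y => PP g 0 (x + h • y)) :=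
    (continuous_PP hg 0).comp (by fun_prop)
  exact Integrable.of_bound hc.aestronglyMeasurable M
    (Filter.Eventually.of_forall fun y => hM _ _ (by simp))

lemma one_step {g : ℝ → ℝ} (hg : ContDiff ℝ (⊤ : ℕ∞) g) {M : ℝ}
    (hM : ∀ (k : ι → ℕ) (x : ι → ℝ), (∀ i, k i ≤ 3) → |PP g k x| ≤ M)
    {μ : Measure (ι → ℝ)} [IsProbabilityMeasure μ] {Q : (ι → ℝ) → NNReal}
    (hμ : IsG μ Q) (x : ι → ℝ) {h : ℝ} (hh : 0 ≤ h) :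
    |∫ y, PP g 0 (x + h • y) ∂μ - PP g 0 x - h ^ 2 / 2 *
      ∑ i, ∑ j, (∫ y, y i * y j ∂μ) * PP g (Pi.single i 1 + Pi.single j 1) x|
      ≤ h ^ 3 * (M * ∫ y, (∑ i, |y i|) ^ 3 ∂μ) := by
  have i1 : ∀ i, Integrable (fun y : ι → ℝ => h * (y i * PP g (Pi.single i 1) x)) μ := fun i =>
    (((hμ.memLp i 1 (by simp)).integrable le_rfl).mul_const _).const_mul _
  have i2 : ∀ i j, Integrable (fun y : ι → ℝ => y i * y j * PP g (Pi.single i 1 + Pi.single j 1) x) μ :=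
    fun i j => (hμ.integrable_mul i j).mul_const _
  have i1' : Integrable (fun y : ι → ℝ => ∑ i, h * (y i * PP g (Pi.single i 1) x)) μ :=
    integrable_finsetSum _ fun i _ => i1 i
  have i2' : Integrable (fun y : ι → ℝ => h ^ 2 / 2 * ∑ i, ∑ j, y i * y j *
      PP g (Pi.single i 1 + Pi.single j 1) x) μ :=
    (integrable_finsetSum _ fun i _ => integrable_finsetSum _ fun j _ => i2 i j).const_mul _
  have i0 := integrable_PP hg hM μ x h
  have e : ∫ y, PP g 0 (x + h • y) ∂μ - PP g 0 x - h ^ 2 / 2 *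
      ∑ i, ∑ j, (∫ y, y i * y j ∂μ) * PP g (Pi.single i 1 + Pi.single j 1) x
      = ∫ y, (PP g 0 (x + h • y) - PP g 0 x - ∑ i, h * (y i * PP g (Pi.single i 1) x)
        - h ^ 2 / 2 * ∑ i, ∑ j, y i * y j * PP g (Pi.single i 1 + Pi.single j 1) x) ∂μ := by
    have j0 : Integrable (fun y => PP g 0 (x + h • y) - PP g 0 x) μ := i0.sub (integrable_const _)
    have j1 : Integrable (fun y => PP g 0 (x + h • y) - PP g 0 x -
      ∑ i, h * (y i * PP g (Pi.single i 1) x)) μ := j0.sub i1'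
    rw [integral_sub j1 i2', integral_sub j0 i1', integral_sub i0 (integrable_const _),
      integral_finsetSum _ (fun i _ => i1 i), integral_const_mul,
      integral_finsetSum _ (fun i _ => integrable_finsetSum _ fun j _ => i2 i j)]
    simp_rw [integral_finsetSum _ (fun j _ => i2 _ j), integral_mul_const, integral_const_mul,
      integral_mul_const, hμ.integral_zero]
    simp
  rw [e, ← integral_const_mul, ← integral_const_mul, ← Real.norm_eq_abs]
  refine norm_integral_le_of_norm_le ((hμ.integrable_cube.const_mul _).const_mul _)
    (Filter.Eventually.of_forall fun y => ?_)
  have := PP_taylor hg hM x (h • y)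
  rw [Real.norm_eq_abs]
  convert this using 1
  · congr 2
    · congr 1
      exact Finset.sum_congr rfl fun i _ => by simp; ring
    · rw [div_mul_eq_mul_div, Finset.mul_sum]
      congr 1
      refine Finset.sum_congr rfl fun i _ => ?_
      rw [Finset.mul_sum]
      exact Finset.sum_congr rfl fun j _ => by simp; ring
  · simp only [Pi.smul_apply, smul_eq_mul, abs_mul, abs_of_nonneg hh, ← Finset.mul_sum]
    ring

lemma PP_pair_nonneg {g : ℝ → ℝ} (g0 : ∀ x, 0 ≤ g x) (ga : Antitone g) {i j : ι} (hij : i ≠ j)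
    (x : ι → ℝ) : 0 ≤ PP g (Pi.single i 1 + Pi.single j 1) x := by
  unfold PP
  rw [← Finset.mul_prod_erase Finset.univ _ (Finset.mem_univ i),
    ← Finset.mul_prod_erase (Finset.univ.erase i) _ (Finset.mem_erase.2 ⟨hij.symm, Finset.mem_univ j⟩),
    ← mul_assoc]
  refine mul_nonneg ?_ (Finset.prod_nonneg fun l hl => ?_)
  · have hd : ∀ y, deriv g y ≤ 0 := fun y => ga.deriv_nonpos
    simp [hij, hij.symm, iteratedDeriv_one]
    exact mul_nonneg_of_nonpos_of_nonpos (hd _) (hd _)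
  · have h1 : l ≠ j := Finset.ne_of_mem_erase hl
    have h2 : l ≠ i := Finset.ne_of_mem_erase (Finset.mem_of_mem_erase hl)
    simpa [h1, h2] using g0 _

lemma two_step {g : ℝ → ℝ} (hg : ContDiff ℝ (⊤ : ℕ∞) g) (g0 : ∀ x, 0 ≤ g x) (ga : Antitone g) {M : ℝ}
    (hM : ∀ (k : ι → ℕ) (x : ι → ℝ), (∀ i, k i ≤ 3) → |PP g k x| ≤ M)
    {μ ν : Measure (ι → ℝ)} [IsProbabilityMeasure μ] [IsProbabilityMeasure ν]
    {Q Q' : (ι → ℝ) → NNReal} (hμ : IsG μ Q) (hν : IsG ν Q')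
    (hd : ∀ i, ∫ y, y i * y i ∂μ = ∫ y, y i * y i ∂ν)
    (ho : ∀ i j, i ≠ j → ∫ y, y i * y j ∂μ ≤ ∫ y, y i * y j ∂ν)
    (x : ι → ℝ) {h : ℝ} (hh : 0 ≤ h) :
    ∫ y, PP g 0 (x + h • y) ∂μ ≤ ∫ y, PP g 0 (x + h • y) ∂ν +
      h ^ 3 * (M * ∫ y, (∑ i, |y i|) ^ 3 ∂μ + M * ∫ y, (∑ i, |y i|) ^ 3 ∂ν) := by
  have h1 := abs_le.1 (one_step hg hM hμ x hh)
  have h2 := abs_le.1 (one_step hg hM hν x hh)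
  have h3 : ∑ i, ∑ j, (∫ y, y i * y j ∂μ) * PP g (Pi.single i 1 + Pi.single j 1) x ≤
      ∑ i, ∑ j, (∫ y, y i * y j ∂ν) * PP g (Pi.single i 1 + Pi.single j 1) x := by
    refine Finset.sum_le_sum fun i _ => Finset.sum_le_sum fun j _ => ?_
    by_cases hij : i = j
    · subst hij; rw [hd]
    · exact mul_le_mul_of_nonneg_right (ho i j hij) (PP_pair_nonneg g0 ga hij x)
  have h4 := mul_le_mul_of_nonneg_left h3 (show 0 ≤ h ^ 2 / 2 by positivity)
  rw [mul_add]
  linarith [h1.2, h2.1]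

lemma slepian_smooth {g : ℝ → ℝ} (hg : ContDiff ℝ (⊤ : ℕ∞) g) (g0 : ∀ x, 0 ≤ g x) (ga : Antitone g) {M : ℝ}
    (hM : ∀ (k : ι → ℕ) (x : ι → ℝ), (∀ i, k i ≤ 3) → |PP g k x| ≤ M)
    {μ ν : Measure (ι → ℝ)} [IsProbabilityMeasure μ] [IsProbabilityMeasure ν]
    {Q Q' : (ι → ℝ) → NNReal} (hμ : IsG μ Q) (hν : IsG ν Q')
    (hd : ∀ i, ∫ y, y i * y i ∂μ = ∫ y, y i * y i ∂ν)
    (ho : ∀ i j, i ≠ j → ∫ y, y i * y j ∂μ ≤ ∫ y, y i * y j ∂ν) :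
    ∫ y, PP g 0 y ∂μ ≤ ∫ y, PP g 0 y ∂ν := by
  set K := M * ∫ y, (∑ i, |y i|) ^ 3 ∂μ + M * ∫ y, (∑ i, |y i|) ^ 3 ∂ν with hK
  let sc : Measure (ι → ℝ) → ℝ → Measure (ι → ℝ) := fun μ c => μ.map (fun x => c • x)
  have hsc : ∀ (μ : Measure (ι → ℝ)) [IsProbabilityMeasure μ] (c : ℝ), IsProbabilityMeasure (sc μ c) :=
    fun μ _ c => Measure.isProbabilityMeasure_map (by fun_prop)
  have hIntPP : ∀ (m : Measure (ι → ℝ)) [IsProbabilityMeasure m], Integrable (PP g 0) m := by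
    intro m _
    simpa using integrable_PP hg hM m 0 1
  -- one swap
  have swap : ∀ (l : Measure (ι → ℝ)) [IsProbabilityMeasure l] (h : ℝ), 0 ≤ h →
      ∫ y, PP g 0 y ∂(l ∗ sc μ h) ≤ ∫ y, PP g 0 y ∂(l ∗ sc ν h) + h ^ 3 * K := by
    intro l _ h hh
    have := hsc μ h
    have := hsc ν h
    have e : ∀ (m : Measure (ι → ℝ)) [IsProbabilityMeasure m],
        ∫ y, PP g 0 y ∂(l ∗ sc m h) = ∫ x, ∫ y, PP g 0 (x + h • y) ∂m ∂l := by
      intro m _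
      have := hsc m h
      rw [integral_conv (hIntPP _)]
      congr 1; ext x
      rw [integral_map (by fun_prop)]
      exact ((continuous_PP hg 0).comp (by fun_prop)).aestronglyMeasurable
    have ie : ∀ (m : Measure (ι → ℝ)) [IsProbabilityMeasure m],
        Integrable (fun x => ∫ y, PP g 0 (x + h • y) ∂m) l := by
      intro m _
      have hc : Continuous (fun p : (ι → ℝ) × (ι → ℝ) => PP g 0 (p.1 + h • p.2)) :=
        (continuous_PP hg 0).comp (by fun_prop)
      have : Integrable (fun p : (ι → ℝ) × (ι → ℝ) => PP g 0 (p.1 + h • p.2)) (l.prod m) :=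
        Integrable.of_bound hc.aestronglyMeasurable M
          (Filter.Eventually.of_forall fun y => hM _ _ (by simp))
      exact this.integral_prod_left
    rw [e μ, e ν]
    calc _ ≤ ∫ x, (∫ y, PP g 0 (x + h • y) ∂ν + h ^ 3 * K) ∂l :=
          integral_mono (ie μ) ((ie ν).add (integrable_const _))
            fun x => two_step hg g0 ga hM hμ hν hd ho x hh
      _ = _ := by rw [integral_add (ie ν) (integrable_const _)]; simp
  -- telescoping
  have main : ∀ N : ℕ, 0 < N → ∫ y, PP g 0 y ∂μ ≤ ∫ y, PP g 0 y ∂ν + N * ((√(1 / N)) ^ 3 * K) := by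
    intro N hN
    have hNr : (0 : ℝ) < N := by exact_mod_cast hN
    let kap : ℕ → Measure (ι → ℝ) := fun k => sc μ (√(k / N)) ∗ sc ν (√((N - k) / N))
    have : ∀ c, IsProbabilityMeasure (sc μ c) := fun c => hsc μ c
    have : ∀ c, IsProbabilityMeasure (sc ν c) := fun c => hsc ν c
    have st : ∀ k : ℕ, k ≤ N →
        ∫ y, PP g 0 y ∂(kap k) ≤ ∫ y, PP g 0 y ∂ν + k * ((√(1 / N)) ^ 3 * K) := by
      intro k
      induction k with
      | zero =>
        intro _
        have : kap 0 = ν := by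
          refine IsG.ext ((hμ.smul _).conv (hν.smul _)) hν fun t => ?_
          apply NNReal.eq
          simp [hNr.ne']
        rw [this]; simp
      | succ k ih =>
        intro hk
        have hk' : (k : ℝ) + 1 ≤ N := by exact_mod_cast hk
        have ih := ih (by omega)
        have := swap (sc μ (√(k / N)) ∗ sc ν (√((N - (k + 1)) / N))) (√(1 / N)) (by positivity)
        have e1 : (sc μ (√(k / N)) ∗ sc ν (√((N - (k + 1)) / N))) ∗ sc μ (√(1 / N)) = kap (k + 1) := by
          refine IsG.ext (((hμ.smul _).conv (hν.smul _)).conv (hμ.smul _))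
            ((hμ.smul _).conv (hν.smul _)) fun t => ?_
          apply NNReal.eq
          push_cast
          rw [Real.sq_sqrt (by positivity), Real.sq_sqrt (by positivity), Real.sq_sqrt (by positivity),
            Real.sq_sqrt (div_nonneg (by linarith) hNr.le)]
          field_simp; ring
        have e2 : (sc μ (√(k / N)) ∗ sc ν (√((N - (k + 1)) / N))) ∗ sc ν (√(1 / N)) = kap k := by
          refine IsG.ext (((hμ.smul _).conv (hν.smul _)).conv (hν.smul _))
            ((hμ.smul _).conv (hν.smul _)) fun t => ?_
          apply NNReal.eq
          push_cast
          rw [Real.sq_sqrt (by positivity), Real.sq_sqrt (by positivity),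
            Real.sq_sqrt (div_nonneg (by linarith) hNr.le),
            Real.sq_sqrt (div_nonneg (by linarith) hNr.le)]
          field_simp; ring
        rw [e1, e2] at this
        push_cast
        linarith
    have : kap N = μ := by
      refine IsG.ext ((hμ.smul _).conv (hν.smul _)) hμ fun t => ?_
      apply NNReal.eq
      simp [hNr.ne']
    have h := st N le_rfl
    rwa [this] at h
  have lim : Filter.Tendsto (fun N : ℕ => ∫ y, PP g 0 y ∂ν + √(1 / (N : ℝ)) * K) Filter.atTop
      (nhds (∫ y, PP g 0 y ∂ν + √0 * K)) := by
    refine Filter.Tendsto.const_add _ (Filter.Tendsto.mul_const _ ?_)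
    exact (Real.continuous_sqrt.tendsto 0).comp tendsto_one_div_atTop_nhds_zero_nat
  simp only [Real.sqrt_zero, zero_mul, add_zero] at lim
  refine ge_of_tendsto lim ?_
  filter_upwards [Filter.eventually_gt_atTop 0] with N hN
  have := main N hN
  have hNr : (0 : ℝ) < N := by exact_mod_cast hN
  have e : (N : ℝ) * ((√(1 / N)) ^ 3 * K) = √(1 / N) * K := by
    have : (√(1 / (N:ℝ))) ^ 2 = 1 / N := Real.sq_sqrt (by positivity)
    rw [pow_succ, this]; field_simp
  rwa [e] at this

end slep

lemma exists_cutoff (u ε : ℝ) (hε : 0 < ε) : ∃ g : ℝ → ℝ, ContDiff ℝ (⊤ : ℕ∞) g ∧ (∀ x, 0 ≤ g x) ∧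
    (∀ x, g x ≤ 1) ∧ Antitone g ∧ (∀ x ≤ u, g x = 1) ∧ (∀ x, u + ε < x → g x = 0) ∧
    ∃ M : ℝ, 1 ≤ M ∧ ∀ k ≤ 3, ∀ x, |iteratedDeriv k g x| ≤ M := by
  let g : ℝ → ℝ := fun x => Real.smoothTransition ((u + ε - x) / ε)
  have hg : ContDiff ℝ (⊤ : ℕ∞) g := Real.smoothTransition.contDiff.comp (by fun_prop)
  have g1 : ∀ x ≤ u, g x = 1 := fun x hx =>
    Real.smoothTransition.one_of_one_le (by rw [le_div_iff₀ hε]; linarith)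
  have g0 : ∀ x, u + ε ≤ x → g x = 0 := fun x hx =>
    Real.smoothTransition.zero_of_nonpos (div_nonpos_of_nonpos_of_nonneg (by linarith) hε.le)
  have hn : ∀ x, 0 ≤ g x := fun x => Real.smoothTransition.nonneg _
  have hl : ∀ x, g x ≤ 1 := fun x => Real.smoothTransition.le_one _
  have ha : Antitone g := fun x y hxy => Real.smoothTransition.monotone (by gcongr)
  refine ⟨g, hg, hn, hl, ha, g1, fun x hx => g0 x hx.le, ?_⟩
  have hcs : HasCompactSupport (deriv g) := by
    refine HasCompactSupport.intro (isCompact_Icc (a := u) (b := u + ε)) fun x hx => ?_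
    rw [Set.mem_Icc, not_and_or, not_le, not_le] at hx
    rcases hx with hx | hx
    · have : g =ᶠ[nhds x] fun _ => 1 := by
        filter_upwards [Iio_mem_nhds hx] with y hy using g1 y (le_of_lt hy)
      rw [this.deriv_eq]; simp
    · have : g =ᶠ[nhds x] fun _ => 0 := by
        filter_upwards [Ioi_mem_nhds hx] with y hy using g0 y (le_of_lt hy)
      rw [this.deriv_eq]; simp
  have hk : ∀ k : ℕ, ∃ M : ℝ, ∀ x, |iteratedDeriv k g x| ≤ M := by
    intro k
    rcases k with _ | k
    · exact ⟨1, fun x => by simpa [abs_of_nonneg (hn x)] using hl x⟩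
    · have : HasCompactSupport (iteratedDeriv (k + 1) g) := by
        induction k with
        | zero => simpa [iteratedDeriv_one] using hcs
        | succ k ih => rw [iteratedDeriv_succ]; exact ih.deriv
      exact (hg.continuous_iteratedDeriv (k + 1) (by exact_mod_cast le_top)).bounded_above_of_compact_support this
  choose M hM using hk
  refine ⟨1 + ∑ k ∈ Finset.range 4, |M k|, by
    linarith [Finset.sum_nonneg (s := Finset.range 4) (f := fun k => |M k|) fun i _ => abs_nonneg _],
    fun k hk x => ?_⟩
  have h1 := Finset.single_le_sum (f := fun k => |M k|) (s := Finset.range 4)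
    (fun i _ => abs_nonneg _) (Finset.mem_range.2 (Nat.lt_succ_of_le hk))
  linarith [hM k x, le_abs_self (M k)]

section slep2
set_option linter.unusedSectionVars false
variable {ι : Type*} [Fintype ι] [DecidableEq ι]

lemma slepian_eps {μ ν : Measure (ι → ℝ)} [IsProbabilityMeasure μ] [IsProbabilityMeasure ν]
    {Q Q' : (ι → ℝ) → NNReal} (hμ : IsG μ Q) (hν : IsG ν Q')
    (hd : ∀ i, ∫ y, y i * y i ∂μ = ∫ y, y i * y i ∂ν)
    (ho : ∀ i j, i ≠ j → ∫ y, y i * y j ∂μ ≤ ∫ y, y i * y j ∂ν) (u ε : ℝ) (hε : 0 < ε) :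
    μ {x | ∀ i, x i ≤ u} ≤ ν {x | ∀ i, x i ≤ u + ε} := by
  obtain ⟨g, hg, hn, hl, ha, h1, h0, M, hM1, hM⟩ := exists_cutoff u ε hε
  have hPM : ∀ (k : ι → ℕ) (x : ι → ℝ), (∀ i, k i ≤ 3) → |PP g k x| ≤ M ^ Fintype.card ι := by
    intro k x hk
    unfold PP
    rw [Finset.abs_prod]
    refine (Finset.prod_le_prod (fun i _ => abs_nonneg _) fun i _ => hM (k i) (hk i) (x i)).trans ?_
    simp
  have key := slepian_smooth hg hn ha hPM hμ hν hd ho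
  have hms : ∀ c : ℝ, MeasurableSet {x : ι → ℝ | ∀ i, x i ≤ c} := fun c => by
    rw [Set.ofPred_forall]
    exact MeasurableSet.iInter fun i => measurableSet_le (measurable_pi_apply i) measurable_const
  have hIntPP : ∀ (m : Measure (ι → ℝ)) [IsProbabilityMeasure m], Integrable (PP g 0) m := by
    intro m _
    simpa using integrable_PP hg hPM m 0 1
  have hnn : ∀ x : ι → ℝ, 0 ≤ PP g 0 x := fun x => Finset.prod_nonneg fun i _ => by simpa using hn _
  have a1 : μ.real {x | ∀ i, x i ≤ u} ≤ ∫ y, PP g 0 y ∂μ := by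
    rw [← integral_indicator_one (hms u)]
    refine integral_mono ((integrable_const (1:ℝ)).indicator (hms u)) (hIntPP μ) fun x => ?_
    by_cases hx : ∀ i, x i ≤ u
    · have : PP g 0 x = 1 := Finset.prod_eq_one fun i _ => by simpa using h1 _ (hx i)
      rw [this]; simp [Set.indicator, hx]
    · simpa [Set.indicator, hx] using hnn x
  have a2 : ∫ y, PP g 0 y ∂ν ≤ ν.real {x | ∀ i, x i ≤ u + ε} := by
    rw [← integral_indicator_one (hms (u + ε))]
    refine integral_mono (hIntPP ν) ((integrable_const (1:ℝ)).indicator (hms (u + ε))) fun x => ?_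
    by_cases hx : ∀ i, x i ≤ u + ε
    · have : PP g 0 x ≤ 1 := Finset.prod_le_one (fun i _ => by simpa using hn _)
        fun i _ => by simpa using hl _
      simpa [Set.indicator, hx] using this
    · have hx' := hx
      push Not at hx
      obtain ⟨i, hi⟩ := hx
      have : PP g 0 x = 0 := Finset.prod_eq_zero (Finset.mem_univ i) (by simpa using h0 _ hi)
      rw [this]; simp [Set.indicator, hx']
  have := a1.trans (key.trans a2)
  rwa [measureReal_def, measureReal_def, ENNReal.toReal_le_toReal (by simp) (by simp)] at this

lemma slepian {μ ν : Measure (ι → ℝ)} [IsProbabilityMeasure μ] [IsProbabilityMeasure ν]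
    {Q Q' : (ι → ℝ) → NNReal} (hμ : IsG μ Q) (hν : IsG ν Q')
    (hd : ∀ i, ∫ y, y i * y i ∂μ = ∫ y, y i * y i ∂ν)
    (ho : ∀ i j, i ≠ j → ∫ y, y i * y j ∂μ ≤ ∫ y, y i * y j ∂ν) (u : ℝ) :
    μ {x | ∀ i, x i ≤ u} ≤ ν {x | ∀ i, x i ≤ u} := by
  have hms : ∀ c : ℝ, MeasurableSet {x : ι → ℝ | ∀ i, x i ≤ c} := fun c => by
    rw [Set.ofPred_forall]
    exact MeasurableSet.iInter fun i => measurableSet_le (measurable_pi_apply i) measurable_const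
  have e : {x : ι → ℝ | ∀ i, x i ≤ u} = ⋂ n : ℕ, {x : ι → ℝ | ∀ i, x i ≤ u + 1 / ((n : ℝ) + 1)} := by
    ext x
    simp only [Set.mem_ofPred_eq, Set.mem_iInter]
    constructor
    · intro h n i
      have : (0:ℝ) < 1 / ((n : ℝ) + 1) := by positivity
      linarith [h i]
    · intro h i
      refine ge_of_tendsto' (f := fun n : ℕ => u + 1 / ((n : ℝ) + 1)) (x := Filter.atTop) ?_ fun n => h n i
      simpa using (tendsto_one_div_add_atTop_nhds_zero_nat (𝕜 := ℝ)).const_add u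
  have lim := tendsto_measure_iInter_atTop (μ := ν)
    (s := fun n : ℕ => {x : ι → ℝ | ∀ i, x i ≤ u + 1 / ((n : ℝ) + 1)})
    (fun n => (hms _).nullMeasurableSet) (fun a b hab x hx i => (hx i).trans (by gcongr))
    ⟨0, by simp⟩
  rw [← e] at lim
  exact ge_of_tendsto' lim fun n => slepian_eps hμ hν hd ho u _ (by positivity)

lemma IsG.cov {μ : Measure (ι → ℝ)} {Q : (ι → ℝ) → NNReal}
    (hμ : IsG μ Q) (i j : ι) : ∫ x, x i * x j ∂μ =
      ((Q (Pi.single i 1 + Pi.single j 1) : ℝ) - Q (Pi.single i 1) - Q (Pi.single j 1)) / 2 := by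
  rw [← hμ.integral_sq, ← hμ.integral_sq, ← hμ.integral_sq]
  have e : ∀ i, (fun x : ι → ℝ => (∑ k, (Pi.single i 1 : ι → ℝ) k * x k) ^ 2) = fun x => x i * x i := by
    intro i; ext x; simp [Pi.single_apply, sq]
  have e2 : (fun x : ι → ℝ => (∑ k, (Pi.single i 1 + Pi.single j 1 : ι → ℝ) k * x k) ^ 2)
      = fun x => x i * x i + x j * x j + 2 * (x i * x j) := by
    ext x; simp [Pi.single_apply, add_mul, Finset.sum_add_distrib]; ring
  have j0 : Integrable (fun x : ι → ℝ => x i * x i + x j * x j) μ :=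
    (hμ.integrable_mul i i).add (hμ.integrable_mul j j)
  rw [e, e, e2, integral_add j0
    ((hμ.integrable_mul i j).const_mul _), integral_add (hμ.integrable_mul i i) (hμ.integrable_mul j j),
    integral_const_mul]
  ring

/-- equicorrelated law -/
noncomputable def equi (ι : Type*) [Fintype ι] (ρ : ℝ) : Measure (ι → ℝ) :=
  ((Measure.pi fun _ : ι => gaussianReal 0 1).prod (gaussianReal 0 1)).map
    (fun p i => √(1 - ρ) * p.1 i + √ρ * p.2)

lemma equi_meas (ρ : ℝ) : Measurable (fun (p : (ι → ℝ) × ℝ) (i : ι) => √(1 - ρ) * p.1 i + √ρ * p.2) := by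
  fun_prop

instance (ρ : ℝ) : IsProbabilityMeasure (equi ι ρ) :=
  Measure.isProbabilityMeasure_map (equi_meas ρ).aemeasurable

lemma equi_isG {ρ : ℝ} (h0 : 0 ≤ ρ) (h1 : ρ ≤ 1) :
    IsG (equi ι ρ) (fun t => Real.toNNReal ((1 - ρ) * ∑ i, t i ^ 2 + ρ * (∑ i, t i) ^ 2)) := by
  intro t
  unfold equi
  rw [Measure.map_map (by fun_prop) (equi_meas ρ)]
  have hm : Measurable ((fun x : ι → ℝ => ∑ i, t i * x i) ∘
      (fun (p : (ι → ℝ) × ℝ) (i : ι) => √(1 - ρ) * p.1 i + √ρ * p.2)) :=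
    Measurable.comp (by fun_prop) (equi_meas ρ)
  refine Measure.ext_of_charFun (funext fun s => ?_)
  rw [charFun_apply_real, integral_map hm.aemeasurable (by fun_prop), charFun_gaussianReal]
  have e : ∀ p : (ι → ℝ) × ℝ, Complex.exp (s * (((fun x : ι → ℝ => ∑ i, t i * x i) ∘
      (fun (p : (ι → ℝ) × ℝ) (i : ι) => √(1 - ρ) * p.1 i + √ρ * p.2)) p : ℝ) * Complex.I) =
      (∏ i, Complex.exp ((s * (t i * √(1 - ρ)) : ℝ) * p.1 i * Complex.I)) *
        Complex.exp ((s * (√ρ * ∑ i, t i) : ℝ) * p.2 * Complex.I) := by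
    intro p
    rw [← Complex.exp_sum, ← Complex.exp_add]
    congr 1
    rw [← Finset.sum_mul, ← add_mul]
    congr 1
    simp only [Function.comp]
    push_cast
    rw [Finset.mul_sum, Finset.mul_sum, Finset.mul_sum, Finset.sum_mul, ← Finset.sum_add_distrib]
    exact Finset.sum_congr rfl fun i _ => by ring
  simp_rw [e]
  rw [integral_prod_mul (fun x : ι → ℝ => ∏ i, Complex.exp ((s * (t i * √(1 - ρ)) : ℝ) * x i * Complex.I))
    (fun z : ℝ => Complex.exp ((s * (√ρ * ∑ i, t i) : ℝ) * z * Complex.I)),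
    integral_fintype_prod_eq_prod (fun i (y : ℝ) => Complex.exp ((s * (t i * √(1 - ρ)) : ℝ) * y * Complex.I))]
  simp_rw [← charFun_apply_real, charFun_gaussianReal]
  rw [← Complex.exp_sum, ← Complex.exp_add]
  congr 1
  have hq : 0 ≤ (1 - ρ) * ∑ i, t i ^ 2 + ρ * (∑ i, t i) ^ 2 :=
    add_nonneg (mul_nonneg (by linarith) (Finset.sum_nonneg fun i _ => sq_nonneg _))
      (mul_nonneg h0 (sq_nonneg _))
  rw [Real.coe_toNNReal _ hq]
  have s1 : ((√(1 - ρ) : ℝ) : ℂ) ^ 2 = ((1 - ρ : ℝ) : ℂ) := by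
    rw [← Complex.ofReal_pow, Real.sq_sqrt (by linarith)]
  have s2 : ((√ρ : ℝ) : ℂ) ^ 2 = (ρ : ℂ) := by
    rw [← Complex.ofReal_pow, Real.sq_sqrt h0]
  push_cast at s1 ⊢
  simp only [mul_zero, zero_mul, zero_sub, one_mul, mul_pow, s1, s2]
  rw [Finset.sum_neg_distrib, ← Finset.sum_div, ← Finset.mul_sum, ← Finset.sum_mul]
  ring

lemma equi_cov {ρ : ℝ} (h0 : 0 ≤ ρ) (h1 : ρ ≤ 1) (i j : ι) :
    ∫ x, x i * x j ∂(equi ι ρ) = if i = j then 1 else ρ := by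
  rw [(equi_isG h0 h1).cov]
  have hq : ∀ t : ι → ℝ, 0 ≤ (1 - ρ) * ∑ i, t i ^ 2 + ρ * (∑ i, t i) ^ 2 := fun t =>
    add_nonneg (mul_nonneg (by linarith) (Finset.sum_nonneg fun i _ => sq_nonneg _))
      (mul_nonneg h0 (sq_nonneg _))
  simp only [Real.coe_toNNReal _ (hq _)]
  have e1 : ∀ i : ι, ∑ k, (Pi.single i 1 : ι → ℝ) k ^ 2 = 1 := by
    intro i; simp [Pi.single_apply, ite_pow]
  have e2 : ∑ k, (Pi.single i 1 + Pi.single j 1 : ι → ℝ) k ^ 2 = 2 + 2 * (if i = j then 1 else 0) := by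
    simp [Pi.single_apply, ite_pow, add_sq, Finset.sum_add_distrib]
    by_cases hij : i = j
    · subst hij; norm_num
    · simp [hij, Ne.symm hij]; norm_num
  have e3 : ∑ k, (Pi.single i 1 + Pi.single j 1 : ι → ℝ) k = 2 := by
    simp [Finset.sum_add_distrib]; norm_num
  rw [e1, e1, e2, e3]
  simp
  split_ifs <;> ring

lemma equi_apply {ρ : ℝ} (h0 : 0 ≤ ρ) (h1 : ρ < 1) (u : ℝ) :
    equi ι ρ {x | ∀ i, x i ≤ u} =
      ∫⁻ w, (gaussianReal 0 1 (Set.Iic w)) ^ Fintype.card ι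
        ∂(gaussianReal (u / √(1 - ρ)) (Real.toNNReal (ρ / (1 - ρ)))) := by
  have hms : MeasurableSet {x : ι → ℝ | ∀ i, x i ≤ u} := by
    rw [Set.ofPred_forall]
    exact MeasurableSet.iInter fun i => measurableSet_le (measurable_pi_apply i) measurable_const
  have hs : 0 < √(1 - ρ) := Real.sqrt_pos.2 (by linarith)
  unfold equi
  rw [Measure.map_apply (equi_meas ρ) hms, Measure.prod_apply_symm (equi_meas ρ hms)]
  have e : ∀ z : ℝ, (Measure.pi fun _ : ι => gaussianReal 0 1) ((fun x => (x, z)) ⁻¹'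
      ((fun (p : (ι → ℝ) × ℝ) (i : ι) => √(1 - ρ) * p.1 i + √ρ * p.2) ⁻¹' {x | ∀ i, x i ≤ u}))
      = (gaussianReal 0 1 (Set.Iic (u / √(1 - ρ) - (√ρ / √(1 - ρ)) * z))) ^ Fintype.card ι := by
    intro z
    have : (fun x : ι → ℝ => (x, z)) ⁻¹'
      ((fun (p : (ι → ℝ) × ℝ) (i : ι) => √(1 - ρ) * p.1 i + √ρ * p.2) ⁻¹' {x | ∀ i, x i ≤ u})
      = Set.univ.pi fun _ => Set.Iic (u / √(1 - ρ) - (√ρ / √(1 - ρ)) * z) := by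
      ext x
      simp only [Set.mem_preimage, Set.mem_ofPred_eq, Set.mem_univ_pi, Set.mem_Iic]
      refine forall_congr' fun i => ?_
      rw [div_mul_eq_mul_div, ← sub_div, le_div_iff₀ hs]
      constructor <;> intro h <;> linarith
    rw [this, Measure.pi_pi]; simp
  simp_rw [e]
  have hmap : (gaussianReal 0 1).map (fun z => u / √(1 - ρ) - (√ρ / √(1 - ρ)) * z)
      = gaussianReal (u / √(1 - ρ)) (Real.toNNReal (ρ / (1 - ρ))) := by
    have : (fun z => u / √(1 - ρ) - (√ρ / √(1 - ρ)) * z) =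
      (fun y => u / √(1 - ρ) - y) ∘ (fun z => (√ρ / √(1 - ρ)) * z) := rfl
    rw [this, ← Measure.map_map (by fun_prop) (by fun_prop), gaussianReal_map_const_mul,
      gaussianReal_map_const_sub]
    congr 1
    · simp
    · apply NNReal.eq
      rw [Real.coe_toNNReal _ (div_nonneg h0 (by linarith))]
      simp [div_pow, Real.sq_sqrt h0, Real.sq_sqrt (show 0 ≤ 1 - ρ by linarith)]
  have hmm : Measurable fun w => (gaussianReal 0 1 (Set.Iic w)) ^ Fintype.card ι := by
    have : Monotone fun w : ℝ => gaussianReal 0 1 (Set.Iic w) := fun a b hab =>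
      measure_mono (Set.Iic_subset_Iic.2 hab)
    exact this.measurable.pow_const _
  rw [← hmap, lintegral_map hmm (by fun_prop)]
end slep2

lemma mills_lower {x : ℝ} (hx : 0 ≤ x) :
    ENNReal.ofReal (((√(2 * π))⁻¹ * exp (-(3 / 2))) / (x + 1) * exp (-(x ^ 2 / 2))) ≤
      gaussianReal 0 1 (Set.Ioi x) := by
  have hx1 : 0 < x + 1 := by linarith
  calc _ = ENNReal.ofReal ((√(2 * π))⁻¹ * exp (-(3 / 2)) * exp (-(x ^ 2 / 2))) *
        volume (Set.Ioc x (x + 1 / (x + 1))) := by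
        rw [Real.volume_Ioc, ← ENNReal.ofReal_mul (by positivity)]
        congr 1; ring
    _ = ∫⁻ _ in Set.Ioc x (x + 1 / (x + 1)),
          ENNReal.ofReal ((√(2 * π))⁻¹ * exp (-(3 / 2)) * exp (-(x ^ 2 / 2))) := by
        rw [setLIntegral_const]
    _ ≤ ∫⁻ y in Set.Ioc x (x + 1 / (x + 1)), gaussianPDF 0 1 y := by
        refine setLIntegral_mono (measurable_gaussianPDF 0 1) fun y hy => ?_
        rw [gaussianPDF_def]
        refine ENNReal.ofReal_le_ofReal ?_
        rw [gaussianPDFReal_def]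
        simp only [NNReal.coe_one, mul_one, sub_zero]
        rw [mul_assoc, ← Real.exp_add]
        refine mul_le_mul_of_nonneg_left (Real.exp_le_exp.2 ?_) (by positivity)
        have h1 : x * (1 / (x + 1)) ≤ 1 := by
          rw [mul_one_div, div_le_one hx1]; linarith
        have h2 : 1 / (x + 1) ≤ 1 := by rw [div_le_one hx1]; linarith
        have h3 : 0 ≤ 1 / (x + 1) := by positivity
        have : y ^ 2 ≤ (x + 1 / (x + 1)) ^ 2 := by
          apply pow_le_pow_left₀ (hx.trans hy.1.le) hy.2
        nlinarith
    _ = gaussianReal 0 1 (Set.Ioc x (x + 1 / (x + 1))) := by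
        rw [gaussianReal_apply 0 one_ne_zero]
    _ ≤ _ := measure_mono Set.Ioc_subset_Ioi_self

lemma pow_bound {w q : ℝ} (hq : ENNReal.ofReal q ≤ gaussianReal 0 1 (Set.Ioi w)) (hq0 : 0 ≤ q) (m : ℕ) :
    (gaussianReal 0 1 (Set.Iic w)) ^ m ≤ ENNReal.ofReal (exp (-(m * q))) := by
  have h1 : gaussianReal 0 1 (Set.Iic w) ≤ ENNReal.ofReal (exp (-q)) := by
    rw [← Set.compl_Ioi, prob_compl_eq_one_sub measurableSet_Ioi]
    calc _ ≤ 1 - ENNReal.ofReal q := tsub_le_tsub_left hq _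
      _ = ENNReal.ofReal (1 - q) := by rw [ENNReal.ofReal_sub _ hq0]; simp
      _ ≤ _ := ENNReal.ofReal_le_ofReal (by linarith [Real.add_one_le_exp (-q)])
  calc _ ≤ (ENNReal.ofReal (exp (-q))) ^ m := pow_le_pow_left' h1 m
    _ = _ := by
      rw [← ENNReal.ofReal_pow (by positivity), ← Real.exp_nat_mul]; congr 2; ring

lemma pow_bound2 : ∃ c : ℝ, 0 < c ∧ ∀ a : ℝ, 1 ≤ a → ∀ m : ℕ, (m : ℝ) = exp (a ^ 2 / 2) →
    ∀ w, a - 1 ≤ w → w ≤ a →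
    (gaussianReal 0 1 (Set.Iic w)) ^ m ≤ ENNReal.ofReal (exp (-(c / a * exp (a * (a - w))))) := by
  refine ⟨((√(2 * π))⁻¹ * exp (-(3 / 2))) * exp (-(1 / 2)) / 2, by positivity, ?_⟩
  intro a ha m hm w hw1 hw2
  have hw : 0 ≤ w := by linarith
  refine (pow_bound (mills_lower hw) (by positivity) m).trans
    (ENNReal.ofReal_le_ofReal (Real.exp_le_exp.2 (neg_le_neg ?_)))
  rw [hm]
  set c0 := (√(2 * π))⁻¹ * exp (-(3 / 2)) with hc0
  have hc : 0 < c0 := by positivity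
  have h1 : exp (-(1 / 2)) * exp (a * (a - w)) ≤ exp (a ^ 2 / 2) * exp (-(w ^ 2 / 2)) := by
    rw [← Real.exp_add, ← Real.exp_add]
    refine Real.exp_le_exp.2 ?_
    nlinarith
  have h2 : 1 / (2 * a) ≤ 1 / (w + 1) := one_div_le_one_div_of_le (by linarith) (by linarith)
  calc _ = c0 * (1 / (2 * a)) * (exp (-(1 / 2)) * exp (a * (a - w))) := by field_simp
    _ ≤ c0 * (1 / (w + 1)) * (exp (a ^ 2 / 2) * exp (-(w ^ 2 / 2))) := by
      refine mul_le_mul (mul_le_mul_of_nonneg_left h2 hc.le) h1 (by positivity) (by positivity)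
    _ = _ := by ring

lemma exp_neg_le_rpow {p x : ℝ} (hp : 0 < p) (hx : 0 < x) : exp (-x) ≤ p ^ p * x ^ (-p) := by
  have h1 : x / p ≤ exp (x / p) := by linarith [Real.add_one_le_exp (x / p)]
  have h2 : (x / p) ^ p ≤ exp x := by
    calc _ ≤ (exp (x / p)) ^ p := Real.rpow_le_rpow (by positivity) h1 hp.le
      _ = exp x := by rw [← Real.exp_mul]; congr 1; field_simp
  rw [Real.div_rpow hx.le hp.le, div_le_iff₀ (by positivity)] at h2
  rw [Real.exp_neg, Real.rpow_neg hx.le, ← div_eq_mul_inv, le_div_iff₀ (by positivity),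
    inv_mul_le_iff₀ (by positivity)]
  exact h2

lemma lint_Ioi {A b s : ℝ} (hA : 0 ≤ A) (hb : 0 < b) :
    ∫⁻ w in Set.Ioi s, ENNReal.ofReal (A * exp (-b * w)) = ENNReal.ofReal (A * (exp (-b * s) / b)) := by
  rw [← ofReal_integral_eq_lintegral_ofReal ((integrableOn_exp_mul_Ioi (by linarith) s).const_mul A)
    (Filter.Eventually.of_forall fun w => by positivity), integral_const_mul,
    integral_exp_mul_Ioi (by linarith)]
  congr 2; rw [neg_div_neg_eq]

lemma lint_Iic {A b s : ℝ} (hA : 0 ≤ A) (hb : 0 < b) :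
    ∫⁻ w in Set.Iic s, ENNReal.ofReal (A * exp (b * w)) = ENNReal.ofReal (A * (exp (b * s) / b)) := by
  rw [← ofReal_integral_eq_lintegral_ofReal ((integrableOn_exp_mul_Iic hb s).const_mul A)
    (Filter.Eventually.of_forall fun w => by positivity), integral_const_mul,
    integral_exp_mul_Iic hb]

lemma pdf_bound (δ a : ℝ) (v : NNReal) (hv : v ≠ 0) (w : ℝ) :
    gaussianPDFReal (δ * a) v w ≤ (√(2 * π * v))⁻¹ * exp (-((1 - δ) ^ 2 / v * (a ^ 2 / 2)))
      * exp ((1 - δ) / v * (a * (a - w))) := by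
  have hv' : (0 : ℝ) < v := by exact_mod_cast pos_iff_ne_zero.2 hv
  simp only [gaussianPDFReal_def]
  rw [mul_assoc (√(2 * π * v))⁻¹, ← Real.exp_add]
  refine mul_le_mul_of_nonneg_left (Real.exp_le_exp.2 ?_) (by positivity)
  rw [← sub_nonneg]
  have : -((1 - δ) ^ 2 / (v:ℝ) * (a ^ 2 / 2)) + (1 - δ) / v * (a * (a - w)) - -(w - δ * a) ^ 2 / (2 * v)
    = (w - a) ^ 2 / (2 * v) := by field_simp; ring
  rw [this]; positivity

lemma tail_bound (δ : ℝ) (hδ : δ < 1) (v : NNReal) (hv : v ≠ 0) :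
    ∃ C : ℝ, 0 < C ∧ ∀ᶠ a : ℝ in Filter.atTop, ∀ m : ℕ, (m : ℝ) = exp (a ^ 2 / 2) →
      ∫⁻ w, (gaussianReal 0 1 (Set.Iic w)) ^ m ∂(gaussianReal (δ * a) v) ≤
        ENNReal.ofReal (C * (exp (-((1 - δ) ^ 2 / v * (a ^ 2 / 2))) * a ^ ((1 - δ) / v - 1))) := by
  have hv' : (0 : ℝ) < v := by exact_mod_cast pos_iff_ne_zero.2 hv
  obtain ⟨c, hc, hpow⟩ := pow_bound2
  set α := (1 - δ) ^ 2 / (v : ℝ) with hα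
  set β := (1 - δ) / (v : ℝ) with hβ
  have hβ0 : 0 < β := div_pos (by linarith) hv'
  set D := (√(2 * π * v))⁻¹ with hD
  have hD0 : 0 < D := by positivity
  set K := (β + 1) ^ (β + 1) * c ^ (-(β + 1)) with hK
  have hK0 : 0 < K := by positivity
  refine ⟨1 + D * K + D / β, by positivity, ?_⟩
  have ev : ∀ᶠ a : ℝ in Filter.atTop, (|α| / 2 + |β - 1|) / c ≤ exp a / a ^ 3 :=
    (Real.tendsto_exp_div_pow_atTop 3).eventually_ge_atTop _
  filter_upwards [ev, Filter.eventually_ge_atTop 1] with a hev ha m hm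
  have ha0 : 0 < a := by linarith
  have hla0 : 0 ≤ Real.log a := Real.log_nonneg ha
  have hla1 : Real.log a ≤ a := by linarith [Real.log_le_sub_one_of_pos ha0]
  set E := exp (-(α * (a ^ 2 / 2))) with hE
  have hE0 : 0 < E := Real.exp_pos _
  set t := Real.log a / a with ht
  have hat : a * t = Real.log a := by rw [ht]; field_simp
  have ht0 : 0 ≤ t := by positivity
  set f : ℝ → ENNReal := fun w => (gaussianReal 0 1 (Set.Iic w)) ^ m with hf
  have hfm : Measurable f := by
    have : Monotone fun w : ℝ => gaussianReal 0 1 (Set.Iic w) := fun a b hab =>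
      measure_mono (Set.Iic_subset_Iic.2 hab)
    exact this.measurable.pow_const _
  have hf1 : ∀ w, f w ≤ 1 := fun w => pow_le_one₀ (by positivity) prob_le_one
  have hpdf := pdf_bound δ a v hv
  have hcover : (Set.univ : Set ℝ) = Set.Iic (a - 1) ∪ (Set.Ioc (a - 1) (a - t) ∪ Set.Ioi (a - t)) := by
    ext w
    simp only [Set.mem_univ, Set.mem_union, Set.mem_Iic, Set.mem_Ioc, Set.mem_Ioi, true_iff]
    by_cases h1 : w ≤ a - 1
    · exact Or.inl h1
    · push Not at h1
      rcases le_or_gt w (a - t) with h2 | h2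
      · exact Or.inr (Or.inl ⟨h1, h2⟩)
      · exact Or.inr (Or.inr h2)
  have R1 : ∫⁻ w in Set.Iic (a - 1), f w ∂(gaussianReal (δ * a) v) ≤
      ENNReal.ofReal (E * a ^ (β - 1)) := by
    have hb : ∀ w ∈ Set.Iic (a - 1), f w ≤ ENNReal.ofReal (E * a ^ (β - 1)) := by
      intro w hw
      calc f w ≤ f (a - 1) := by
            apply pow_le_pow_left'
            exact measure_mono (Set.Iic_subset_Iic.2 hw)
        _ ≤ ENNReal.ofReal (exp (-(c / a * exp (a * (a - (a - 1)))))) :=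
            hpow a ha m hm _ le_rfl (by linarith)
        _ ≤ _ := by
            refine ENNReal.ofReal_le_ofReal ?_
            rw [hE, Real.rpow_def_of_pos ha0, ← Real.exp_add]
            refine Real.exp_le_exp.2 ?_
            rw [div_le_div_iff₀ hc (by positivity)] at hev
            have e1 : (|α| / 2 + |β - 1|) * a ^ 2 ≤ c / a * exp a := by
              rw [div_mul_eq_mul_div, le_div_iff₀ ha0]
              calc _ = (|α| / 2 + |β - 1|) * a ^ 3 := by ring
                _ ≤ _ := by linarith
            have e2 : a * (a - (a - 1)) = a := by ring
            rw [e2]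
            have e3 : α * (a ^ 2 / 2) ≤ |α| / 2 * a ^ 2 := by
              nlinarith [le_abs_self α, sq_nonneg a]
            have e4 : -(Real.log a * (β - 1)) ≤ |β - 1| * a ^ 2 := by
              calc -(Real.log a * (β - 1)) ≤ Real.log a * |β - 1| := by
                    nlinarith [neg_abs_le (β - 1)]
                _ ≤ a ^ 2 * |β - 1| := mul_le_mul_of_nonneg_right (by nlinarith) (abs_nonneg _)
                _ = _ := by ring
            linarith
    calc _ ≤ ∫⁻ w in Set.Iic (a - 1), ENNReal.ofReal (E * a ^ (β - 1)) ∂(gaussianReal (δ * a) v) :=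
          setLIntegral_mono measurable_const hb
      _ ≤ _ := by
          rw [setLIntegral_const]
          exact mul_le_of_le_one_right' prob_le_one
  have dens : ∀ s : Set ℝ, MeasurableSet s → ∫⁻ w in s, f w ∂(gaussianReal (δ * a) v) =
      ∫⁻ w in s, gaussianPDF (δ * a) v w * f w := by
    intro s hs
    rw [gaussianReal_of_var_ne_zero _ hv, restrict_withDensity hs,
      lintegral_withDensity_eq_lintegral_mul _ (measurable_gaussianPDF _ _) hfm]
    rfl
  have R2 : ∫⁻ w in Set.Ioc (a - 1) (a - t), f w ∂(gaussianReal (δ * a) v) ≤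
      ENNReal.ofReal (D * K * (E * a ^ (β - 1))) := by
    rw [dens _ measurableSet_Ioc]
    calc _ ≤ ∫⁻ w in Set.Ioc (a - 1) (a - t),
          ENNReal.ofReal (D * E * K * a ^ (β + 1) * exp (-a ^ 2) * exp (a * w)) := by
          refine setLIntegral_mono (by fun_prop) fun w hw => ?_
          have h1 := hpow a ha m hm w hw.1.le (by linarith [hw.2])
          rw [gaussianPDF_def]
          refine (mul_le_mul' (ENNReal.ofReal_le_ofReal (hpdf w)) h1).trans ?_
          rw [← ENNReal.ofReal_mul (by positivity)]
          refine ENNReal.ofReal_le_ofReal ?_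
          have h2 := exp_neg_le_rpow (p := β + 1) (x := c / a * exp (a * (a - w))) (by linarith) (by positivity)
          have h3 : (c / a * exp (a * (a - w))) ^ (-(β + 1)) =
              c ^ (-(β + 1)) * a ^ (β + 1) * exp (-(β + 1) * (a * (a - w))) := by
            rw [Real.mul_rpow (by positivity) (by positivity), Real.div_rpow hc.le ha0.le,
              Real.rpow_neg ha0.le, ← Real.exp_mul, div_inv_eq_mul]
            congr 2; ring
          rw [h3] at h2
          refine (mul_le_mul_of_nonneg_left h2 (by positivity)).trans (le_of_eq ?_)
          have h4 : exp (-a ^ 2) * exp (a * w) =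
              exp (β * (a * (a - w))) * exp (-(β + 1) * (a * (a - w))) := by
            rw [← Real.exp_add, ← Real.exp_add]; congr 1; ring
          rw [mul_assoc (D * E * K * a ^ (β + 1)), h4, hK]
          ring
      _ ≤ ∫⁻ w in Set.Iic (a - t),
          ENNReal.ofReal (D * E * K * a ^ (β + 1) * exp (-a ^ 2) * exp (a * w)) :=
          lintegral_mono_set Set.Ioc_subset_Iic_self
      _ = _ := by
          rw [lint_Iic (by positivity) ha0]
          congr 1
          have h5 : exp (-a ^ 2) * exp (a * (a - t)) = a⁻¹ := by
            rw [← Real.exp_add, ← Real.exp_log (inv_pos.2 ha0), Real.log_inv, ← hat]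
            congr 1; ring
          have h6 : a ^ (β + 1) = a ^ (β - 1) * a ^ 2 := by
            rw [← Real.rpow_natCast, ← Real.rpow_add ha0]; congr 1; push_cast; ring
          calc _ = D * E * K * a ^ (β + 1) * (exp (-a ^ 2) * exp (a * (a - t))) / a := by ring
            _ = _ := by rw [h5, h6]; field_simp
  have R3 : ∫⁻ w in Set.Ioi (a - t), f w ∂(gaussianReal (δ * a) v) ≤
      ENNReal.ofReal (D / β * (E * a ^ (β - 1))) := by
    rw [dens _ measurableSet_Ioi]
    calc _ ≤ ∫⁻ w in Set.Ioi (a - t),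
          ENNReal.ofReal (D * E * exp (β * a ^ 2) * exp (-(β * a) * w)) := by
          refine setLIntegral_mono (by fun_prop) fun w hw => ?_
          rw [gaussianPDF_def]
          refine (mul_le_of_le_one_right' (hf1 w)).trans ?_
          refine ENNReal.ofReal_le_ofReal ((hpdf w).trans (le_of_eq ?_))
          rw [mul_assoc (D * E), ← Real.exp_add]
          congr 2; ring
      _ = _ := by
          rw [lint_Ioi (by positivity) (by positivity)]
          congr 1
          have h5 : exp (β * a ^ 2) * exp (-(β * a) * (a - t)) = a ^ β := by
            rw [← Real.exp_add, Real.rpow_def_of_pos ha0, ← hat]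
            congr 1; ring
          have h6 : a ^ β = a ^ (β - 1) * a := by
            rw [← Real.rpow_add_one ha0.ne']; congr 1; ring
          calc _ = D * E * (exp (β * a ^ 2) * exp (-(β * a) * (a - t))) / (β * a) := by ring
            _ = _ := by rw [h5, h6]; field_simp
  calc ∫⁻ w, f w ∂(gaussianReal (δ * a) v)
      = ∫⁻ w in Set.univ, f w ∂(gaussianReal (δ * a) v) := by rw [Measure.restrict_univ]
    _ ≤ ENNReal.ofReal (E * a ^ (β - 1)) + (ENNReal.ofReal (D * K * (E * a ^ (β - 1))) +
        ENNReal.ofReal (D / β * (E * a ^ (β - 1)))) := by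
        rw [hcover]
        exact (lintegral_union_le _ _ _).trans
          (add_le_add R1 ((lintegral_union_le _ _ _).trans (add_le_add R2 R3)))
    _ = _ := by
        rw [← ENNReal.ofReal_add (by positivity) (by positivity),
          ← ENNReal.ofReal_add (by positivity) (by positivity)]
        congr 1; ring

noncomputable def extJ {n : ℕ} {J : Finset (Fin n)} (t : J → ℝ) : Fin n → ℝ :=
  fun i => if h : i ∈ J then t ⟨i, h⟩ else 0

lemma extJ_sum {n : ℕ} {J : Finset (Fin n)} (t : J → ℝ) (f : Fin n → ℝ) :
    ∑ i, extJ t i * f i = ∑ i : J, t i * f i := by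
  have h1 : ∑ i : J, t i * f i = ∑ i : J, extJ t i * f i := by
    refine Finset.sum_congr rfl fun i _ => ?_
    simp [extJ]
  rw [h1, Finset.sum_coe_sort J (fun i => extJ t i * f i)]
  symm
  refine Finset.sum_subset (Finset.subset_univ J) fun i _ hi => ?_
  simp [extJ, hi]

lemma extJ_single {n : ℕ} {J : Finset (Fin n)} (i : J) :
    extJ (Pi.single i 1 : J → ℝ) = Pi.single (i : Fin n) 1 := by
  ext k
  by_cases hk : k ∈ J
  · simp only [extJ, hk, dif_pos, Pi.single_apply]
    congr 1
    simp [Subtype.ext_iff]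
  · have : k ≠ i := fun h => hk (h ▸ i.2)
    simp [extJ, hk, this]

lemma extJ_add {n : ℕ} {J : Finset (Fin n)} (s t : J → ℝ) : extJ (s + t) = extJ s + extJ t := by
  ext k
  by_cases hk : k ∈ J <;> simp [extJ, hk]

lemma reduction {Ω : Type} [MeasureSpace Ω] [IsProbabilityMeasure (ℙ : Measure Ω)] {n : ℕ}
    {X : Fin n → Ω → ℝ} {R : Matrix (Fin n) (Fin n) ℝ} (hX : IsCenteredGaussianVec X R)
    {ρ : ℝ} (h0 : 0 ≤ ρ) (h1 : ρ < 1) (J : Finset (Fin n))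
    (hJ : ∀ i ∈ J, ∀ j ∈ J, i ≠ j → R i j ≤ ρ) (u : ℝ) :
    (ℙ : Measure Ω) {ω | (⨆ i, X i ω) ≤ u} ≤ ∫⁻ w, (gaussianReal 0 1 (Set.Iic w)) ^ J.card
        ∂(gaussianReal (u / √(1 - ρ)) (Real.toNNReal (ρ / (1 - ρ)))) := by
  obtain ⟨hm, hdiag, hlaw⟩ := hX
  let Y : Ω → (J → ℝ) := fun ω i => X i ω
  have hY : Measurable Y := measurable_pi_lambda _ fun i => hm i
  have : IsProbabilityMeasure ((ℙ : Measure Ω).map Y) :=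
    Measure.isProbabilityMeasure_map hY.aemeasurable
  have hG : IsG ((ℙ : Measure Ω).map Y)
      (fun t => Real.toNNReal (∑ i, ∑ j, extJ t i * R i j * extJ t j)) := by
    intro t
    rw [Measure.map_map (by fun_prop) hY, ← hlaw]
    congr 1
    ext ω
    exact (extJ_sum t fun i => X i ω).symm
  have q1 : ∀ i : J, ∑ k, ∑ l, extJ (Pi.single i 1 : J → ℝ) k * R k l * extJ (Pi.single i 1 : J → ℝ) l = 1 := by
    intro i
    rw [extJ_single]
    simp [Pi.single_apply, hdiag]
  have q2 : ∀ i j : J, ∑ k, ∑ l, extJ (Pi.single i 1 + Pi.single j 1 : J → ℝ) k * R k l *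
      extJ (Pi.single i 1 + Pi.single j 1 : J → ℝ) l = 2 + R i j + R j i := by
    intro i j
    rw [extJ_add, extJ_single, extJ_single]
    simp [Pi.single_apply, add_mul, mul_add, Finset.sum_add_distrib, hdiag]
    ring
  have hS := slepian hG (equi_isG (ι := J) h0 h1.le)
    (fun i => by
      rw [hG.cov, equi_cov h0 h1.le, q1, q2, hdiag]
      norm_num)
    (fun i j hij => by
      rw [hG.cov, equi_cov h0 h1.le, q1, q1, q2, if_neg hij]
      have hij' : (i : Fin n) ≠ j := fun h => hij (Subtype.ext h)
      have a1 := hJ i i.2 j j.2 hij'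
      have a2 := hJ j j.2 i i.2 hij'.symm
      have : max (2 + R i j + R j i) 0 ≤ 2 + 2 * ρ := max_le (by linarith) (by linarith)
      simp only [Real.coe_toNNReal']
      simp
      linarith) u
  have hms : MeasurableSet {x : J → ℝ | ∀ i, x i ≤ u} := by
    rw [Set.ofPred_forall]
    exact MeasurableSet.iInter fun i => measurableSet_le (measurable_pi_apply i) measurable_const
  rw [Measure.map_apply hY hms, equi_apply h0 h1] at hS
  simp only [Fintype.card_coe] at hS
  refine le_trans (measure_mono ?_) hS
  intro ω hω
  have hω' : (⨆ i, X i ω) ≤ u := hω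
  have goal' : ∀ i : J, Y ω i ≤ u := fun i => (le_ciSup (f := fun i => X i ω) (Set.finite_range _).bddAbove (i : Fin n)).trans hω'
  exact goal'

theorem lower_tail_bound_on_subset (δ₀ ρt₀ : ℝ)
    (hδ : δ₀ ∈ Set.Ioo (0 : ℝ) 1) (hρ : ρt₀ ∈ Set.Ioo (0 : ℝ) 1) :
    ∃ C : ℝ, 0 < C ∧
      ∀ (Ω : Type) [MeasureSpace Ω], IsProbabilityMeasure (ℙ : Measure Ω) →
        ∀ (n : ℕ) (X : Fin n → Ω → ℝ) (R : Matrix (Fin n) (Fin n) ℝ),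
          IsCenteredGaussianVec X R →
          ∀ (J : Finset (Fin n)), 2 ≤ J.card →
            (∀ i ∈ J, ∀ j ∈ J, i ≠ j → R i j ≤ ρt₀) →
            (ℙ : Measure Ω) {ω | (⨆ i, X i ω)
                ≤ δ₀ * Real.sqrt (2 * (1 - ρt₀) * Real.log (J.card : ℝ))}
              ≤ ENNReal.ofReal
                  (C * (J.card : ℝ) ^ (-((1 - ρt₀) * (1 - δ₀) ^ 2 / ρt₀))
                    * Real.log (J.card : ℝ) ^ (((1 - ρt₀) * (1 - δ₀) / ρt₀ - 1) / 2)) := by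
  obtain ⟨hρ0, hρ1⟩ := hρ
  have hρ1' : 0 < 1 - ρt₀ := by linarith
  have hvpos : 0 < ρt₀ / (1 - ρt₀) := div_pos hρ0 hρ1'
  obtain ⟨C1, hC1, hev⟩ := tail_bound δ₀ hδ.2 (Real.toNNReal (ρt₀ / (1 - ρt₀)))
    (by simpa using hvpos)
  rw [Real.coe_toNNReal _ hvpos.le] at hev
  have ea : (1 - δ₀) ^ 2 / (ρt₀ / (1 - ρt₀)) = (1 - ρt₀) * (1 - δ₀) ^ 2 / ρt₀ := by field_simp
  have eb : (1 - δ₀) / (ρt₀ / (1 - ρt₀)) = (1 - ρt₀) * (1 - δ₀) / ρt₀ := by field_simp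
  rw [ea, eb] at hev
  set α := (1 - ρt₀) * (1 - δ₀) ^ 2 / ρt₀ with hα
  set β := (1 - ρt₀) * (1 - δ₀) / ρt₀ with hβ
  have hlim : Filter.Tendsto (fun m : ℕ => √(2 * Real.log (m : ℝ))) Filter.atTop Filter.atTop :=
    Real.tendsto_sqrt_atTop.comp ((Real.tendsto_log_atTop.comp tendsto_natCast_atTop_atTop).const_mul_atTop
      (by norm_num))
  obtain ⟨m0, hm0⟩ := Filter.eventually_atTop.1 (hlim.eventually hev)
  let B : ℕ → ℝ := fun m => (m : ℝ) ^ (-α) * Real.log (m : ℝ) ^ ((β - 1) / 2)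
  have hB : ∀ m : ℕ, 2 ≤ m → 0 < B m := by
    intro m hm
    have h1 : (1 : ℝ) < m := by exact_mod_cast hm
    have := Real.log_pos h1
    have : (0 : ℝ) < m := by linarith
    positivity
  refine ⟨C1 * 2 ^ ((β - 1) / 2) + ∑ m ∈ Finset.range m0, |1 / B m|, by positivity, ?_⟩
  intro Ω _ hP n X R hX J hJ2 hJ
  have hm1 : (1 : ℝ) < J.card := by exact_mod_cast hJ2
  have hlog := Real.log_pos hm1
  have hBm := hB _ hJ2
  have hsum : 0 ≤ ∑ m ∈ Finset.range m0, |1 / B m| := Finset.sum_nonneg fun _ _ => abs_nonneg _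
  have hC2 : 0 < C1 * 2 ^ ((β - 1) / 2) := by positivity
  rw [mul_assoc (C1 * 2 ^ ((β - 1) / 2) + ∑ m ∈ Finset.range m0, |1 / B m|)]
  change _ ≤ ENNReal.ofReal (_ * B J.card)
  rcases lt_or_ge J.card m0 with hlt | hge
  · refine prob_le_one.trans ?_
    rw [← ENNReal.ofReal_one]
    refine ENNReal.ofReal_le_ofReal ?_
    have h1 := Finset.single_le_sum (f := fun m => |1 / B m|) (s := Finset.range m0)
      (fun i _ => abs_nonneg _) (Finset.mem_range.2 hlt)
    have h2 : 1 / B J.card ≤ C1 * 2 ^ ((β - 1) / 2) + ∑ m ∈ Finset.range m0, |1 / B m| := by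
      have := le_abs_self (1 / B J.card)
      linarith
    rwa [div_le_iff₀ hBm] at h2
  · have key := reduction hX hρ0.le hρ1 J hJ (δ₀ * Real.sqrt (2 * (1 - ρt₀) * Real.log (J.card : ℝ)))
    have hs : 0 < √(1 - ρt₀) := Real.sqrt_pos.2 hρ1'
    have e1 : δ₀ * Real.sqrt (2 * (1 - ρt₀) * Real.log (J.card : ℝ)) / √(1 - ρt₀)
        = δ₀ * √(2 * Real.log (J.card : ℝ)) := by
      have : 2 * (1 - ρt₀) * Real.log (J.card : ℝ) = (2 * Real.log (J.card : ℝ)) * (1 - ρt₀) := by ring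
      rw [this, Real.sqrt_mul (by positivity)]
      field_simp
    rw [e1] at key
    have hsq : √(2 * Real.log (J.card : ℝ)) ^ 2 / 2 = Real.log (J.card : ℝ) := by
      rw [Real.sq_sqrt (by positivity)]; ring
    refine key.trans ((hm0 J.card hge J.card (by rw [hsq, Real.exp_log (by linarith)])).trans ?_)
    refine ENNReal.ofReal_le_ofReal ?_
    rw [hsq]
    have e2 : exp (-(α * Real.log (J.card : ℝ))) = (J.card : ℝ) ^ (-α) := by
      rw [Real.rpow_def_of_pos (by linarith)]; congr 1; ring
    have e3 : √(2 * Real.log (J.card : ℝ)) ^ (β - 1) =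
        2 ^ ((β - 1) / 2) * Real.log (J.card : ℝ) ^ ((β - 1) / 2) := by
      rw [Real.sqrt_eq_rpow, ← Real.rpow_mul (by positivity), ← Real.mul_rpow (by norm_num) hlog.le]
      congr 1; ring
    rw [e2, e3]
    calc _ = C1 * 2 ^ ((β - 1) / 2) * B J.card := by simp only [B]; ring
      _ ≤ _ := mul_le_mul_of_nonneg_right (by linarith) hBm.le
end

section
/- Fix constants δ₀, ρ₀ ∈ (0,1) and set α₀ = (1−ρ₀)(1−δ₀)²/ρ₀ and β₀ = (1−ρ₀)(1−δ₀)/ρ₀. Then there exists a constant C > 0 depending only on (δ₀, ρ₀) such that for every n ≥ 2 and every centered Gaussian vector X = (X_1,…,X_n) with var(X_i) = 1 for all i and correlation matrix R satisfying |R_{ij}| ≤ ρ₀ for all i ≠ j, one has P(max_{1≤i≤n} |X_i| ≤ δ₀ √(2(1−ρ₀)log(2n))) ≤ C · (2n)^{−α₀} · (log(2n))^{(β₀−1)/2}. -/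
open MeasureTheory ProbabilityTheory Real

theorem key_nonneg {Ω ι : Type*} [MeasurableSpace Ω] [Fintype ι] {P : Measure Ω}
    {U : Ω → ℝ} {Z : ι → Ω → ℝ}
    (hG : HasGaussianLaw (fun ω => (U ω, fun j => Z j ω)) P)
    (hUm : Measurable U) (hZm : ∀ j, Measurable (Z j))
    (hU : ∫ ω, U ω ∂P = 0) (i : ι) (hi : cov[U, Z i; P] = 0)
    (hcov : ∀ j, 0 ≤ cov[U, Z j; P])
    (f : (ι → ℝ) → ℝ) (hfm : Measurable f) (K : ℝ) (hfK : ∀ z, |f z| ≤ K)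
    (hmono : ∀ z z' : ι → ℝ, z i = z' i → (∀ j, z j ≤ z' j) → f z ≤ f z') :
    0 ≤ ∫ ω, U ω * f (fun j => Z j ω) ∂P := by
  have := hG.isProbabilityMeasure
  have hUG : HasGaussianLaw U P := hG.fst
  have hZG : HasGaussianLaw (fun ω j => Z j ω) P := hG.snd
  have hU2 : MemLp U 2 P := hUG.memLp_two
  have hZ2 : ∀ j, MemLp (Z j) 2 P := fun j => (hZG.eval j).memLp_two
  have hUi : Integrable U P := hUG.integrable
  by_cases hV : Var[U; P] = 0
  · have h0 : U =ᵐ[P] fun _ => P[U] := by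
      have := (evariance_eq_zero_iff hUm.aemeasurable).1 (by
        rw [← ENNReal.toReal_eq_zero_iff _ |>.trans (or_iff_left hU2.evariance_lt_top.ne)]
        exact hV)
      exact this
    have : (fun ω => U ω * f (fun j => Z j ω)) =ᵐ[P] fun _ => 0 := by
      filter_upwards [h0] with ω hω
      rw [hω, hU, zero_mul]
    rw [integral_congr_ae this]; simp
  · have hVpos : 0 < Var[U; P] := lt_of_le_of_ne (variance_nonneg _ _) (Ne.symm hV)
    set a : ι → ℝ := fun j => cov[U, Z j; P] / Var[U; P] with ha
    have ha0 : ∀ j, 0 ≤ a j := fun j => div_nonneg (hcov j) hVpos.le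
    have hai : a i = 0 := by simp [ha, hi]
    let W : ι → Ω → ℝ := fun j ω => Z j ω - a j * U ω
    have hWm : ∀ j, Measurable (W j) := fun j => (hZm j).sub (hUm.const_mul _)
    have hW : HasGaussianLaw (fun ω => ((fun _ : Unit => U ω), fun j => W j ω)) P := by
      let T : (ℝ × (ι → ℝ)) →L[ℝ] ((Unit → ℝ) × (ι → ℝ)) :=
        .prod (.pi fun _ => .fst ℝ ℝ (ι → ℝ))
          (.pi fun j => (.proj j : (ι → ℝ) →L[ℝ] ℝ) ∘L (.snd ℝ ℝ (ι → ℝ)) - a j • .fst ℝ ℝ (ι → ℝ))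
      exact hG.map_fun T
    have hind : IndepFun (fun ω (_ : Unit) => U ω) (fun ω j => W j ω) P := by
      refine hW.indepFun_of_covariance_eval (X := fun _ => U) (Y := W) ?_
      intro _ j
      have : W j = Z j - (fun ω => a j * U ω) := rfl
      rw [this, covariance_sub_right hU2 (hZ2 j) (hU2.const_mul _), covariance_const_mul_right,
        covariance_self hUm.aemeasurable, ha]
      field_simp
      ring
    have hind' : IndepFun U (fun ω => f (fun j => W j ω)) P := by
      have := hind.comp (φ := fun u : Unit → ℝ => u ()) (ψ := f) (measurable_pi_apply (X := fun _ : Unit => ℝ) ()) hfm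
      exact this
    have hWf : Measurable (fun ω => f (fun j => W j ω)) := hfm.comp (measurable_pi_lambda _ hWm)
    have hZf : Measurable (fun ω => f (fun j => Z j ω)) := hfm.comp (measurable_pi_lambda _ hZm)
    have h1 : ∫ ω, U ω * f (fun j => W j ω) ∂P = 0 := by
      rw [hind'.integral_fun_mul_eq_mul_integral hUm.aestronglyMeasurable
        hWf.aestronglyMeasurable, hU, zero_mul]
    have hintg : ∀ φ : Ω → ℝ, Measurable φ → (∀ ω, |φ ω| ≤ K) →
        Integrable (fun ω => U ω * φ ω) P := fun φ h1 h2 =>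
      hUi.mul_bdd (c := K) h1.aestronglyMeasurable (ae_of_all _ h2)
    have h2 : ∫ ω, U ω * f (fun j => Z j ω) ∂P
        = ∫ ω, (U ω * f (fun j => Z j ω) - U ω * f (fun j => W j ω)) ∂P := by
      rw [integral_sub (hintg _ hZf fun _ => hfK _) (hintg _ hWf fun _ => hfK _), h1, sub_zero]
    rw [h2]
    refine integral_nonneg fun ω => ?_
    show 0 ≤ U ω * f (fun j => Z j ω) - U ω * f (fun j => W j ω)
    rw [← mul_sub]
    rcases le_total 0 (U ω) with h | h
    · refine mul_nonneg h (sub_nonneg.2 (hmono _ _ ?_ ?_))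
      · simp [W, hai]
      · intro j; simp only [W]; nlinarith [mul_nonneg (ha0 j) h]
    · refine mul_nonneg_of_nonpos_of_nonpos h (sub_nonpos.2 (hmono _ _ ?_ ?_))
      · simp [W, hai]
      · intro j; simp only [W]; nlinarith [mul_nonneg (ha0 j) (neg_nonneg.2 h)]

/-- The Slepian inequality for products of smooth decreasing functions. -/
theorem slepian_smooth_s7 {Ω ι : Type*} [MeasurableSpace Ω] [Fintype ι] [DecidableEq ι]
    {P : Measure Ω} {X Y : ι → Ω → ℝ}
    (hG : HasGaussianLaw (fun ω => ((fun j => X j ω), fun j => Y j ω)) P)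
    (hXm : ∀ j, Measurable (X j)) (hYm : ∀ j, Measurable (Y j))
    (hX0 : ∀ j, ∫ ω, X j ω ∂P = 0) (hY0 : ∀ j, ∫ ω, Y j ω ∂P = 0)
    (hXY : ∀ i j, cov[X i, Y j; P] = 0)
    (hvar : ∀ i, cov[X i, X i; P] = cov[Y i, Y i; P])
    (hcov : ∀ i j, cov[X i, X j; P] ≤ cov[Y i, Y j; P])
    (g : ℝ → ℝ) (hg : ContDiff ℝ 1 g) (hanti : Antitone g) (hg0 : ∀ x, 0 ≤ g x)
    (hg1 : ∀ x, g x ≤ 1) (K : ℝ) (hK : ∀ x, |deriv g x| ≤ K) :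
    ∫ ω, ∏ i, g (X i ω) ∂P ≤ ∫ ω, ∏ i, g (Y i ω) ∂P := by
  have := hG.isProbabilityMeasure
  have hXG : HasGaussianLaw (fun ω j => X j ω) P := hG.fst
  have hYG : HasGaussianLaw (fun ω j => Y j ω) P := hG.snd
  have hX2 : ∀ j, MemLp (X j) 2 P := fun j => (hXG.eval j).memLp_two
  have hY2 : ∀ j, MemLp (Y j) 2 P := fun j => (hYG.eval j).memLp_two
  have hXi : ∀ j, Integrable (X j) P := fun j => (hXG.eval j).integrable
  have hYi : ∀ j, Integrable (Y j) P := fun j => (hYG.eval j).integrable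
  have hK0 : 0 ≤ K := (abs_nonneg _).trans (hK 0)
  have hgd : Differentiable ℝ g := hg.differentiable (by norm_num)
  have hgc : Continuous g := hg.continuous
  have hgc' : Continuous (deriv g) := hg.continuous_deriv (by norm_num)
  have hgneg : ∀ x, deriv g x ≤ 0 := fun x => hanti.deriv_nonpos
  let Z : ℝ → ι → Ω → ℝ := fun θ j ω => Real.cos θ * X j ω + Real.sin θ * Y j ω
  let U : ℝ → ι → Ω → ℝ := fun θ j ω => -Real.sin θ * X j ω + Real.cos θ * Y j ω
  have hZm : ∀ θ j, Measurable (Z θ j) := fun θ j =>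
    ((hXm j).const_mul _).add ((hYm j).const_mul _)
  have hUm : ∀ θ j, Measurable (U θ j) := fun θ j =>
    ((hXm j).const_mul _).add ((hYm j).const_mul _)
  have hprod : ∀ (s : Finset ι) (z : ι → ℝ), |∏ j ∈ s, g (z j)| ≤ 1 := by
    intro s z
    rw [abs_of_nonneg (Finset.prod_nonneg fun _ _ => hg0 _)]
    exact Finset.prod_le_one (fun _ _ => hg0 _) (fun _ _ => hg1 _)
  let h : ℝ → ℝ := fun θ => ∫ ω, ∏ i, g (Z θ i ω) ∂P
  let F' : ℝ → Ω → ℝ := fun θ ω =>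
    ∑ i, (∏ j ∈ Finset.univ.erase i, g (Z θ j ω)) • (deriv g (Z θ i ω) * U θ i ω)
  have hUb : ∀ θ i ω, |U θ i ω| ≤ |X i ω| + |Y i ω| := by
    intro θ i ω
    refine (abs_add_le _ _).trans (add_le_add ?_ ?_)
    · rw [abs_mul, abs_neg]
      exact mul_le_of_le_one_left (abs_nonneg _) (Real.abs_sin_le_one _)
    · rw [abs_mul]
      exact mul_le_of_le_one_left (abs_nonneg _) (Real.abs_cos_le_one _)
  have hderiv : ∀ θ, HasDerivAt h (∫ ω, F' θ ω ∂P) θ := by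
    intro θ
    have hmeasF : ∀ θ, Measurable fun ω => ∏ i, g (Z θ i ω) := fun θ =>
      Finset.measurable_fun_prod _ fun i _ => hgc.measurable.comp (hZm θ i)
    refine (hasDerivAt_integral_of_dominated_loc_of_deriv_le
      (F := fun θ ω => ∏ i, g (Z θ i ω)) (F' := F') (s := Set.univ)
      (bound := fun ω => ∑ i, K * (|X i ω| + |Y i ω|)) Filter.univ_mem
      (.of_forall fun θ => (hmeasF θ).aestronglyMeasurable) ?_ ?_ ?_ ?_ ?_).2
    · refine Integrable.of_bound (hmeasF θ).aestronglyMeasurable 1 (ae_of_all _ fun ω => ?_)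
      exact hprod _ _
    · refine Measurable.aestronglyMeasurable ?_
      refine Finset.measurable_fun_sum _ fun i _ => ?_
      simp only [smul_eq_mul]
      refine Measurable.mul ?_ ((hgc'.measurable.comp (hZm θ i)).mul (hUm θ i))
      exact Finset.measurable_fun_prod _ fun i _ => hgc.measurable.comp (hZm θ i)
    · refine ae_of_all _ fun ω θ _ => ?_
      refine (norm_sum_le _ _).trans (Finset.sum_le_sum fun i _ => ?_)
      rw [smul_eq_mul, norm_mul, norm_mul]
      refine (mul_le_of_le_one_left (by positivity) (hprod _ _)).trans ?_
      exact mul_le_mul (hK _) (hUb _ _ _) (abs_nonneg _) hK0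
    · exact integrable_finsetSum _ fun i _ => ((hXi i).abs.add (hYi i).abs).const_mul K
    · refine ae_of_all _ fun ω θ _ => ?_
      refine HasDerivAt.fun_finsetProd (f := fun i θ => g (Z θ i ω)) fun i _ => ?_
      refine (hgd _).hasDerivAt.comp θ ?_
      have := ((Real.hasDerivAt_cos θ).mul_const (X i ω)).add
        ((Real.hasDerivAt_sin θ).mul_const (Y i ω))
      exact this
  have hnonneg : ∀ θ ∈ Set.Icc 0 (π / 2), 0 ≤ ∫ ω, F' θ ω ∂P := by
    intro θ hθ
    have hs : 0 ≤ Real.sin θ := Real.sin_nonneg_of_nonneg_of_le_pi hθ.1 (by linarith [hθ.2, Real.pi_pos])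
    have hc : 0 ≤ Real.cos θ := Real.cos_nonneg_of_mem_Icc ⟨by linarith [hθ.1, Real.pi_pos], hθ.2⟩
    let f : ι → (ι → ℝ) → ℝ := fun i z => (∏ j ∈ Finset.univ.erase i, g (z j)) * deriv g (z i)
    have hfm : ∀ i, Measurable (f i) := by
      intro i
      refine Measurable.mul ?_ (hgc'.measurable.comp (measurable_pi_apply i))
      exact Finset.measurable_fun_prod _ fun i _ => hgc.measurable.comp (measurable_pi_apply i)
    have hfb : ∀ i z, |f i z| ≤ K := by
      intro i z
      simp only [f]
      rw [abs_mul]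
      exact (mul_le_of_le_one_left (abs_nonneg _) (hprod _ _)).trans (hK _)
    have hUG : ∀ i, HasGaussianLaw (U θ i) P := by
      intro i
      let T : ((ι → ℝ) × (ι → ℝ)) →L[ℝ] ℝ :=
        -Real.sin θ • ((.proj i : (ι → ℝ) →L[ℝ] ℝ) ∘L (.fst ℝ (ι → ℝ) (ι → ℝ))) +
        Real.cos θ • ((.proj i : (ι → ℝ) →L[ℝ] ℝ) ∘L (.snd ℝ (ι → ℝ) (ι → ℝ)))
      have := hG.map_fun T
      exact this
    have hF : ∀ ω, F' θ ω = ∑ i, U θ i ω * f i (fun j => Z θ j ω) := by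
      intro ω
      refine Finset.sum_congr rfl fun i _ => ?_
      simp only [f, smul_eq_mul]; ring
    simp_rw [hF]
    have hI : ∀ i, Integrable (fun ω => U θ i ω * f i (fun j => Z θ j ω)) P := fun i =>
      (hUG i).integrable.mul_bdd (c := K)
        ((hfm i).comp (measurable_pi_lambda _ (hZm θ))).aestronglyMeasurable
        (ae_of_all _ fun ω => hfb _ _)
    rw [integral_finsetSum _ fun i _ => hI i]
    refine Finset.sum_nonneg fun i _ => ?_
    have hcv : ∀ j, cov[U θ i, Z θ j; P]
        = Real.sin θ * Real.cos θ * (cov[Y i, Y j; P] - cov[X i, X j; P]) := by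
      intro j
      have e1 : U θ i = (fun ω => -Real.sin θ * X i ω) + (fun ω => Real.cos θ * Y i ω) := rfl
      have e2 : Z θ j = (fun ω => Real.cos θ * X j ω) + (fun ω => Real.sin θ * Y j ω) := rfl
      have m1 := (hX2 i).const_mul (-Real.sin θ)
      have m2 := (hY2 i).const_mul (Real.cos θ)
      have m3 := (hX2 j).const_mul (Real.cos θ)
      have m4 := (hY2 j).const_mul (Real.sin θ)
      rw [e1, e2, covariance_add_left m1 m2 (m3.add m4), covariance_add_right m1 m3 m4,
        covariance_add_right m2 m3 m4]
      simp only [covariance_const_mul_left, covariance_const_mul_right]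
      rw [hXY i j, covariance_comm (Y i) (X j), hXY j i]
      ring
    refine key_nonneg (K := K) (i := i) ?_ (hUm θ i) (hZm θ) ?_ ?_ ?_ (f i) (hfm i) (hfb i) ?_
    · let T : ((ι → ℝ) × (ι → ℝ)) →L[ℝ] (ℝ × (ι → ℝ)) :=
        .prod (-Real.sin θ • ((.proj i : (ι → ℝ) →L[ℝ] ℝ) ∘L (.fst ℝ (ι → ℝ) (ι → ℝ))) +
          Real.cos θ • ((.proj i : (ι → ℝ) →L[ℝ] ℝ) ∘L (.snd ℝ (ι → ℝ) (ι → ℝ))))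
          (Real.cos θ • (.fst ℝ (ι → ℝ) (ι → ℝ)) + Real.sin θ • (.snd ℝ (ι → ℝ) (ι → ℝ)))
      have := hG.map_fun T
      exact this
    · simp only [U]
      rw [integral_add ((hXi i).const_mul _) ((hYi i).const_mul _), integral_const_mul,
        integral_const_mul, hX0, hY0]; simp
    · rw [hcv, hvar]; simp
    · intro j
      rw [hcv]
      exact mul_nonneg (mul_nonneg hs hc) (sub_nonneg.2 (hcov i j))
    · intro z z' hzi hz
      simp only [f]
      rw [hzi]
      refine mul_le_mul_of_nonpos_right ?_ (hgneg _)
      exact Finset.prod_le_prod (fun _ _ => hg0 _) fun j _ => hanti (hz j)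
  have hmono : MonotoneOn h (Set.Icc 0 (π / 2)) := by
    refine monotoneOn_of_deriv_nonneg (convex_Icc _ _)
      (fun θ _ => (hderiv θ).continuousAt.continuousWithinAt)
      (fun θ _ => (hderiv θ).differentiableAt.differentiableWithinAt) fun θ hθ => ?_
    rw [(hderiv θ).deriv]
    exact hnonneg θ (interior_subset hθ)
  have hp : (0 : ℝ) ≤ π / 2 := by positivity
  have := hmono ⟨le_rfl, hp⟩ ⟨hp, le_rfl⟩ hp
  simpa [h, Z] using this

theorem smoothTransition_deriv_bdd : ∃ K : ℝ, ∀ x, |deriv Real.smoothTransition x| ≤ K := by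
  have hc : Continuous (deriv Real.smoothTransition) :=
    (Real.smoothTransition.contDiff (n := 1)).continuous_deriv (by norm_num)
  obtain ⟨K, hK⟩ := (isCompact_Icc (a := (-1 : ℝ)) (b := 2)).exists_bound_of_continuousOn
    hc.continuousOn
  refine ⟨K, fun x => ?_⟩
  have hK0 : 0 ≤ K := (norm_nonneg _).trans (hK 0 (by constructor <;> norm_num))
  by_cases hx : x ∈ Set.Icc (-1 : ℝ) 2
  · exact hK x hx
  · have hd : deriv Real.smoothTransition x = 0 := by
      rw [Set.mem_Icc, not_and_or, not_le, not_le] at hx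
      rcases hx with hx | hx
      · have : Real.smoothTransition =ᶠ[nhds x] fun _ => 0 := by
          filter_upwards [gt_mem_nhds hx] with y hy
          exact Real.smoothTransition.zero_of_nonpos (by linarith)
        rw [this.deriv_eq]; simp
      · have : Real.smoothTransition =ᶠ[nhds x] fun _ => 1 := by
          filter_upwards [lt_mem_nhds hx] with y hy
          exact Real.smoothTransition.one_of_one_le (by linarith)
        rw [this.deriv_eq]; simp
    rw [hd, abs_zero]; exact hK0

/-- The Slepian inequality, for jointly Gaussian independent copies. -/
theorem slepian_joint {Ω ι : Type*} [MeasurableSpace Ω] [Fintype ι] [DecidableEq ι]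
    {P : Measure Ω} {X Y : ι → Ω → ℝ}
    (hG : HasGaussianLaw (fun ω => ((fun j => X j ω), fun j => Y j ω)) P)
    (hXm : ∀ j, Measurable (X j)) (hYm : ∀ j, Measurable (Y j))
    (hX0 : ∀ j, ∫ ω, X j ω ∂P = 0) (hY0 : ∀ j, ∫ ω, Y j ω ∂P = 0)
    (hXY : ∀ i j, cov[X i, Y j; P] = 0)
    (hvar : ∀ i, cov[X i, X i; P] = cov[Y i, Y i; P])
    (hcov : ∀ i j, cov[X i, X j; P] ≤ cov[Y i, Y j; P]) (t : ℝ) :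
    P {ω | ∀ i, X i ω ≤ t} ≤ P {ω | ∀ i, Y i ω ≤ t} := by
  have := hG.isProbabilityMeasure
  obtain ⟨K, hK⟩ := smoothTransition_deriv_bdd
  have hsetX : ∀ s, MeasurableSet {ω | ∀ i, X i ω ≤ s} := fun s => by
    rw [Set.ofPred_forall]
    exact MeasurableSet.iInter fun i => measurableSet_le (hXm i) measurable_const
  have hsetY : ∀ s, MeasurableSet {ω | ∀ i, Y i ω ≤ s} := fun s => by
    rw [Set.ofPred_forall]
    exact MeasurableSet.iInter fun i => measurableSet_le (hYm i) measurable_const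
  have hstep : ∀ k : ℕ, P {ω | ∀ i, X i ω ≤ t} ≤ P {ω | ∀ i, Y i ω ≤ t + 1 / ((k : ℝ) + 1)} := by
    intro k
    set a : ℝ := (k : ℝ) + 1 with ha
    have hapos : 0 < a := by positivity
    let g : ℝ → ℝ := fun x => Real.smoothTransition (1 - a * (x - t))
    have hg0 : ∀ x, 0 ≤ g x := fun x => Real.smoothTransition.nonneg _
    have hg1 : ∀ x, g x ≤ 1 := fun x => Real.smoothTransition.le_one _
    have hg : ContDiff ℝ 1 g := by
      refine (Real.smoothTransition.contDiff (n := 1)).comp ?_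
      fun_prop
    have hanti : Antitone g := fun x y hxy =>
      Real.smoothTransition.monotone (by nlinarith)
    have hder : ∀ x, |deriv g x| ≤ K * a := by
      intro x
      have h1 : HasDerivAt (fun x => 1 - a * (x - t)) (-a) x := by
        have := ((((hasDerivAt_id x).sub_const t).const_mul a).const_sub 1)
        simpa using this
      have h2 := (((Real.smoothTransition.contDiff (n := 1)).differentiable (by norm_num))
        (1 - a * (x - t))).hasDerivAt.comp x h1
      have h3 : deriv g x = deriv Real.smoothTransition (1 - a * (x - t)) * (-a) := h2.deriv
      rw [h3, abs_mul, abs_neg, abs_of_pos hapos]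
      exact mul_le_mul_of_nonneg_right (hK _) hapos.le
    have hmain := slepian_smooth_s7 hG hXm hYm hX0 hY0 hXY hvar hcov g hg hanti hg0 hg1 (K * a) hder
    have hgm : Measurable g := hg.continuous.measurable
    have hintg : ∀ V : ι → Ω → ℝ, (∀ j, Measurable (V j)) →
        Integrable (fun ω => ∏ i, g (V i ω)) P := by
      intro V hV
      refine Integrable.of_bound (Finset.measurable_fun_prod _ fun i _ =>
        hgm.comp (hV i)).aestronglyMeasurable 1 (ae_of_all _ fun ω => ?_)
      rw [Real.norm_eq_abs, abs_of_nonneg (Finset.prod_nonneg fun _ _ => hg0 _)]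
      exact Finset.prod_le_one (fun _ _ => hg0 _) (fun _ _ => hg1 _)
    have hL : P.real {ω | ∀ i, X i ω ≤ t} ≤ ∫ ω, ∏ i, g (X i ω) ∂P := by
      rw [← integral_indicator_one (hsetX t)]
      refine integral_mono ((integrable_const (1 : ℝ)).indicator (hsetX t)) (hintg X hXm) fun ω => ?_
      by_cases hω : ω ∈ {ω | ∀ i, X i ω ≤ t}
      · rw [Set.indicator_of_mem hω]
        have : ∀ i, g (X i ω) = 1 := fun i =>
          Real.smoothTransition.one_of_one_le (by nlinarith [hω i])
        simp [this]
      · rw [Set.indicator_of_notMem hω]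
        exact Finset.prod_nonneg fun _ _ => hg0 _
    have hR : ∫ ω, ∏ i, g (Y i ω) ∂P ≤ P.real {ω | ∀ i, Y i ω ≤ t + 1 / a} := by
      rw [← integral_indicator_one (hsetY _)]
      refine integral_mono (hintg Y hYm) ((integrable_const (1 : ℝ)).indicator (hsetY _)) fun ω => ?_
      by_cases hω : ω ∈ {ω | ∀ i, Y i ω ≤ t + 1 / a}
      · rw [Set.indicator_of_mem hω]
        exact Finset.prod_le_one (fun _ _ => hg0 _) (fun _ _ => hg1 _)
      · rw [Set.indicator_of_notMem hω]
        simp only [Set.mem_ofPred_eq, not_forall, not_le] at hω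
        obtain ⟨i, hi⟩ := hω
        refine le_of_eq (Finset.prod_eq_zero (Finset.mem_univ i) ?_)
        refine Real.smoothTransition.zero_of_nonpos ?_
        have : 1 / a < Y i ω - t := by linarith
        rw [div_lt_iff₀ hapos] at this
        nlinarith
    have := (hL.trans hmain).trans hR
    exact (ENNReal.toReal_le_toReal (measure_ne_top _ _) (measure_ne_top _ _)).1 this
  have hlim : Filter.Tendsto (fun k : ℕ => P {ω | ∀ i, Y i ω ≤ t + 1 / ((k : ℝ) + 1)})
      Filter.atTop (nhds (P (⋂ k : ℕ, {ω | ∀ i, Y i ω ≤ t + 1 / ((k : ℝ) + 1)}))) := by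
    refine tendsto_measure_iInter_atTop (fun k => (hsetY _).nullMeasurableSet) ?_
      ⟨0, measure_ne_top _ _⟩
    intro k l hkl ω hω i
    refine (hω i).trans ?_
    have : (1 : ℝ) / ((l : ℝ) + 1) ≤ 1 / ((k : ℝ) + 1) := Nat.one_div_le_one_div hkl
    linarith
  refine (ge_of_tendsto' hlim hstep).trans (measure_mono fun ω hω i => ?_)
  have h0 : Filter.Tendsto (fun k : ℕ => t + 1 / ((k : ℝ) + 1)) Filter.atTop (nhds (t + 0)) :=
    tendsto_const_nhds.add tendsto_one_div_add_atTop_nhds_zero_nat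
  rw [add_zero] at h0
  exact ge_of_tendsto' h0 fun k => (Set.mem_iInter.1 hω k) i

set_option maxHeartbeats 1000000 in
/-- The Slepian inequality. -/
theorem slepian_s7 {Ω Ω' ι : Type*} [MeasurableSpace Ω] [MeasurableSpace Ω'] [Fintype ι]
    [DecidableEq ι] {P : Measure Ω} {Q : Measure Ω'} {X : ι → Ω → ℝ} {Y : ι → Ω' → ℝ}
    (hX : HasGaussianLaw (fun ω j => X j ω) P) (hY : HasGaussianLaw (fun ω j => Y j ω) Q)
    (hXm : ∀ j, Measurable (X j)) (hYm : ∀ j, Measurable (Y j))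
    (hX0 : ∀ j, ∫ ω, X j ω ∂P = 0) (hY0 : ∀ j, ∫ ω, Y j ω ∂Q = 0)
    (hvar : ∀ i, cov[X i, X i; P] = cov[Y i, Y i; Q])
    (hcov : ∀ i j, cov[X i, X j; P] ≤ cov[Y i, Y j; Q]) (t : ℝ) :
    P {ω | ∀ i, X i ω ≤ t} ≤ Q {ω | ∀ i, Y i ω ≤ t} := by
  have := hX.isProbabilityMeasure
  have := hY.isProbabilityMeasure
  have hf : MeasurePreserving Prod.fst (P.prod Q) P := measurePreserving_fst
  have hs : MeasurePreserving Prod.snd (P.prod Q) Q := measurePreserving_snd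
  let X' : ι → Ω × Ω' → ℝ := fun j p => X j p.1
  let Y' : ι → Ω × Ω' → ℝ := fun j p => Y j p.2
  have hX'm : ∀ j, Measurable (X' j) := fun j => (hXm j).comp measurable_fst
  have hY'm : ∀ j, Measurable (Y' j) := fun j => (hYm j).comp measurable_snd
  have hX'G : HasGaussianLaw (fun p j => X' j p) (P.prod Q) := by
    constructor
    have h1 : (P.prod Q).map (fun p j => X' j p) = P.map (fun ω j => X j ω) := by
      conv_rhs => rw [← hf.map_eq]
      rw [Measure.map_map (measurable_pi_lambda _ hXm) measurable_fst]
      rfl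
    rw [h1]; exact hX.isGaussian_map
  have hY'G : HasGaussianLaw (fun p j => Y' j p) (P.prod Q) := by
    constructor
    have h1 : (P.prod Q).map (fun p j => Y' j p) = Q.map (fun ω j => Y j ω) := by
      conv_rhs => rw [← hs.map_eq]
      rw [Measure.map_map (measurable_pi_lambda _ hYm) measurable_snd]
      rfl
    rw [h1]; exact hY.isGaussian_map
  have hind : IndepFun (fun p : Ω × Ω' => fun j => X' j p) (fun p j => Y' j p) (P.prod Q) :=
    indepFun_prod (X := fun ω j => X j ω) (Y := fun ω j => Y j ω)
      (measurable_pi_lambda _ hXm) (measurable_pi_lambda _ hYm)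
  have hcX : ∀ i j, cov[X' i, X' j; P.prod Q] = cov[X i, X j; P] := by
    intro i j
    conv_rhs => rw [← hf.map_eq]
    rw [covariance_map (hXm i).aestronglyMeasurable (hXm j).aestronglyMeasurable
      measurable_fst.aemeasurable]
    rfl
  have hcY : ∀ i j, cov[Y' i, Y' j; P.prod Q] = cov[Y i, Y j; Q] := by
    intro i j
    conv_rhs => rw [← hs.map_eq]
    rw [covariance_map (hYm i).aestronglyMeasurable (hYm j).aestronglyMeasurable
      measurable_snd.aemeasurable]
    rfl
  have hmain := slepian_joint (X := X') (Y := Y') (hind.hasGaussianLaw hX'G hY'G) hX'm hY'm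
    (fun j => by
      rw [← hX0 j]; conv_rhs => rw [← hf.map_eq]
      rw [integral_map measurable_fst.aemeasurable (hXm j).aestronglyMeasurable])
    (fun j => by
      rw [← hY0 j]; conv_rhs => rw [← hs.map_eq]
      rw [integral_map measurable_snd.aemeasurable (hYm j).aestronglyMeasurable])
    (fun i j => by
      have : IndepFun (X' i) (Y' j) (P.prod Q) :=
        indepFun_prod (X := X i) (Y := Y j) (hXm i) (hYm j)
      exact this.covariance_eq_zero (hX'G.eval i).memLp_two (hY'G.eval j).memLp_two)
    (fun i => by rw [hcX, hcY, hvar]) (fun i j => by rw [hcX, hcY]; exact hcov i j) t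
  have hmX : MeasurableSet {ω | ∀ i, X i ω ≤ t} := by
    rw [Set.ofPred_forall]
    exact MeasurableSet.iInter fun i => measurableSet_le (hXm i) measurable_const
  have hmY : MeasurableSet {ω | ∀ i, Y i ω ≤ t} := by
    rw [Set.ofPred_forall]
    exact MeasurableSet.iInter fun i => measurableSet_le (hYm i) measurable_const
  rw [← hf.measure_preimage hmX.nullMeasurableSet, ← hs.measure_preimage hmY.nullMeasurableSet]
  exact hmain

/-- Comparison with the equicorrelated Gaussian vector. -/
theorem equi_bound {Ω ι : Type*} [MeasurableSpace Ω] [Fintype ι] [DecidableEq ι]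
    {P : Measure Ω} {X : ι → Ω → ℝ} (ρ : ℝ) (hρ0 : 0 < ρ) (hρ1 : ρ < 1)
    (hX : HasGaussianLaw (fun ω j => X j ω) P) (hXm : ∀ j, Measurable (X j))
    (hX0 : ∀ j, ∫ ω, X j ω ∂P = 0) (hvar : ∀ i, cov[X i, X i; P] = 1)
    (hcov : ∀ i j, i ≠ j → cov[X i, X j; P] ≤ ρ) (t : ℝ) :
    P {ω | ∀ i, X i ω ≤ t} ≤
      ∫⁻ z, gaussianReal 0 1 (Set.Iic ((t + √ρ * z) / √(1 - ρ))) ^ Fintype.card ι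
        ∂(gaussianReal 0 1) := by
  have h1ρ : 0 < 1 - ρ := by linarith
  set s := √(1 - ρ) with hs
  set r := √ρ with hr
  have hspos : 0 < s := Real.sqrt_pos.2 h1ρ
  have hs2 : s * s = 1 - ρ := Real.mul_self_sqrt h1ρ.le
  have hr2 : r * r = ρ := Real.mul_self_sqrt hρ0.le
  set γ : Measure ℝ := gaussianReal 0 1 with hγ
  let Γ : Measure (ι → ℝ) := Measure.pi fun _ => γ
  let Q : Measure (ℝ × (ι → ℝ)) := γ.prod Γ
  have hidγ : HasGaussianLaw (id : ℝ → ℝ) γ := IsGaussian.hasGaussianLaw_id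
  have hev : ∀ j, MeasurePreserving (fun x : ι → ℝ => x j) Γ γ := fun j =>
    measurePreserving_eval (fun _ : ι => γ) j
  have hevG : ∀ j, HasGaussianLaw (fun x : ι → ℝ => x j) Γ := fun j => by
    constructor
    rw [(hev j).map_eq]; infer_instance
  have hiind : iIndepFun (fun (j : ι) (x : ι → ℝ) => x j) Γ :=
    iIndepFun_pi (μ := fun _ : ι => γ) (X := fun _ => id) (fun _ => aemeasurable_id)
  have hΓG : HasGaussianLaw (fun x : ι → ℝ => fun j => x j) Γ := hiind.hasGaussianLaw hevG
  have : IsGaussian Γ := by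
    have := hΓG.isGaussian_map
    have e : (fun x : ι → ℝ => fun j => x j) = id := rfl
    rwa [e, Measure.map_id] at this
  have hQG : HasGaussianLaw (id : ℝ × (ι → ℝ) → ℝ × (ι → ℝ)) Q := IsGaussian.hasGaussianLaw_id
  let Y : ι → ℝ × (ι → ℝ) → ℝ := fun j p => s * p.2 j + (-r) * p.1
  have hYm : ∀ j, Measurable (Y j) := fun j => by
    simp only [Y]; fun_prop
  have hYG : HasGaussianLaw (fun p j => Y j p) Q := by
    let T : (ℝ × (ι → ℝ)) →L[ℝ] (ι → ℝ) :=
      .pi fun j => s • ((.proj j : (ι → ℝ) →L[ℝ] ℝ) ∘L (.snd ℝ ℝ (ι → ℝ)))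
        + (-r) • .fst ℝ ℝ (ι → ℝ)
    exact hQG.map_fun T
  let A : ℝ × (ι → ℝ) → ℝ := fun p => p.1
  let B : ι → ℝ × (ι → ℝ) → ℝ := fun j p => p.2 j
  have hA : MeasurePreserving A Q γ := measurePreserving_fst
  have hB : ∀ j, MeasurePreserving (B j) Q γ := fun j => (hev j).comp measurePreserving_snd
  have hA2 : MemLp A 2 Q := (memLp_id_gaussianReal (μ := 0) (v := 1) 2).comp_measurePreserving hA
  have hB2 : ∀ j, MemLp (B j) 2 Q := fun j =>
    (memLp_id_gaussianReal (μ := 0) (v := 1) 2).comp_measurePreserving (hB j)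
  have hmean : ∀ V : ℝ × (ι → ℝ) → ℝ, MeasurePreserving V Q γ → ∫ p, V p ∂Q = 0 := by
    intro V hV
    have : ∫ p, V p ∂Q = ∫ x, x ∂(Q.map V) :=
      (integral_map hV.measurable.aemeasurable aestronglyMeasurable_id).symm
    rw [this, hV.map_eq, hγ, integral_id_gaussianReal]
  have hvarV : ∀ V : ℝ × (ι → ℝ) → ℝ, MeasurePreserving V Q γ → cov[V, V; Q] = 1 := by
    intro V hV
    rw [covariance_self hV.measurable.aemeasurable]
    have : Var[V; Q] = Var[id; Q.map V] := by
      rw [variance_map aemeasurable_id hV.measurable.aemeasurable]; rfl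
    rw [this, hV.map_eq, hγ, variance_id_gaussianReal]; simp
  have hAB : ∀ j, cov[A, B j; Q] = 0 := fun j => by
    have : IndepFun A (B j) Q :=
      indepFun_prod (X := fun x : ℝ => x) (Y := fun x : ι → ℝ => x j) measurable_id
        (measurable_pi_apply j)
    exact this.covariance_eq_zero hA2 (hB2 j)
  have hBB : ∀ i j, i ≠ j → cov[B i, B j; Q] = 0 := fun i j hij => by
    have h1 : cov[fun x : ι → ℝ => x i, fun x : ι → ℝ => x j; Γ] = 0 :=
      (hiind.indepFun hij).covariance_eq_zero (hevG i).memLp_two (hevG j).memLp_two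
    rw [← h1]
    have hs : MeasurePreserving (Prod.snd : ℝ × (ι → ℝ) → (ι → ℝ)) Q Γ := measurePreserving_snd
    conv_rhs => rw [← hs.map_eq]
    rw [covariance_map (measurable_pi_apply i).aestronglyMeasurable
      (measurable_pi_apply j).aestronglyMeasurable measurable_snd.aemeasurable]
    rfl
  have hYcov : ∀ i j, cov[Y i, Y j; Q] = s * s * cov[B i, B j; Q] + r * r := by
    intro i j
    have e1 : ∀ i, Y i = (fun p => s * B i p) + (fun p => -r * A p) := fun i => rfl
    have m1 := fun i => (hB2 i).const_mul s
    have m2 := hA2.const_mul (-r)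
    rw [e1, e1, covariance_add_left (m1 i) m2 ((m1 j).add m2), covariance_add_right (m1 i) (m1 j) m2,
      covariance_add_right m2 (m1 j) m2]
    simp only [covariance_const_mul_left, covariance_const_mul_right]
    rw [hAB j, covariance_comm (B i) A, hAB i, hvarV A hA]
    ring
  have hYvar : ∀ i, cov[Y i, Y i; Q] = 1 := fun i => by
    rw [hYcov, hvarV _ (hB i), hs2, hr2]; ring
  have hmain := slepian_s7 (Y := Y) hX hYG hXm hYm hX0
    (fun j => by
      have i1 : Integrable (B j) Q := (hB2 j).integrable (by norm_num)
      have i2 : Integrable A Q := hA2.integrable (by norm_num)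
      have : ∫ p, Y j p ∂Q = ∫ p, (s * B j p + -r * A p) ∂Q := rfl
      rw [this, integral_add (i1.const_mul s) (i2.const_mul _), integral_const_mul,
        integral_const_mul, hmean A hA, hmean _ (hB j)]
      simp)
    (fun i => by rw [hvar, hYvar])
    (fun i j => by
      by_cases hij : i = j
      · subst hij; rw [hvar, hYvar]
      · rw [hYcov, hBB i j hij, hr2]; simpa using hcov i j hij) t
  refine hmain.trans (le_of_eq ?_)
  have hmS : MeasurableSet {p | ∀ i, Y i p ≤ t} := by
    rw [Set.ofPred_forall]
    exact MeasurableSet.iInter fun i => measurableSet_le (hYm i) measurable_const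
  show (γ.prod Γ) _ = _
  rw [Measure.prod_apply hmS]
  refine lintegral_congr fun z => ?_
  have : Prod.mk z ⁻¹' {p | ∀ i, Y i p ≤ t}
      = Set.pi Set.univ fun _ : ι => Set.Iic ((t + r * z) / s) := by
    ext x
    simp only [Set.mem_preimage, Set.mem_ofPred_eq, Set.mem_pi, Set.mem_univ, forall_true_left,
      Set.mem_Iic, Y]
    refine forall_congr' fun i => ?_
    rw [le_div_iff₀ hspos]
    constructor <;> intro h <;> linarith
  rw [this, Measure.pi_pi]
  simp

/-- The small ball probability is bounded by that of the equicorrelated model. -/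
theorem small_ball_le {Ω : Type*} [MeasureSpace Ω] [IsProbabilityMeasure (ℙ : Measure Ω)]
    {n : ℕ} {X : Fin n → Ω → ℝ} {R : Matrix (Fin n) (Fin n) ℝ} (ρ : ℝ) (hρ0 : 0 < ρ) (hρ1 : ρ < 1)
    (hX : IsCenteredGaussianVec X R) (hR : ∀ i j, i ≠ j → |R i j| ≤ ρ) (t : ℝ) :
    (ℙ : Measure Ω) {ω | (⨆ i, |X i ω|) ≤ t} ≤
      ∫⁻ z, gaussianReal 0 1 (Set.Iic ((t + √ρ * z) / √(1 - ρ))) ^ (2 * n)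
        ∂(gaussianReal 0 1) := by
  obtain ⟨hXm, hdiag, hlaw⟩ := hX
  have hvec : Measurable fun ω j => X j ω := measurable_pi_lambda _ hXm
  have hXG : HasGaussianLaw (fun ω j => X j ω) (ℙ : Measure Ω) := by
    constructor
    refine isGaussian_of_map_eq_gaussianReal fun L => ?_
    refine ⟨0, Real.toNNReal (∑ i, ∑ j, L (Pi.single i 1) * R i j * L (Pi.single j 1)), ?_⟩
    · rw [Measure.map_map L.continuous.measurable hvec, ← hlaw fun i => L (Pi.single i 1)]
      congr 1
      ext ω
      simp only [Function.comp]
      conv_lhs => rw [← Finset.univ_sum_single (fun j => X j ω)]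
      rw [map_sum]
      refine Finset.sum_congr rfl fun i _ => ?_
      have : Pi.single i (X i ω) = X i ω • (Pi.single i 1 : Fin n → ℝ) := by
        rw [← Pi.single_smul]; simp
      rw [this, map_smul, smul_eq_mul, mul_comm]
  have hX2 : ∀ j, MemLp (X j) 2 (ℙ : Measure Ω) := fun j => (hXG.eval j).memLp_two
  have hvarlin : ∀ a : Fin n → ℝ, Var[fun ω => ∑ i, a i * X i ω; ℙ]
      = max (∑ i, ∑ j, a i * R i j * a j) 0 := by
    intro a
    have hm : Measurable fun ω => ∑ i, a i * X i ω :=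
      Finset.measurable_fun_sum _ fun i _ => (hXm i).const_mul _
    have : Var[fun ω => ∑ i, a i * X i ω; ℙ]
        = Var[id; Measure.map (fun ω => ∑ i, a i * X i ω) ℙ] := by
      rw [variance_map aemeasurable_id hm.aemeasurable]; rfl
    rw [this, hlaw, variance_id_gaussianReal]; simp [Real.coe_toNNReal']
  have hlaw1 : ∀ i, Measure.map (X i) ℙ = gaussianReal 0 1 := by
    intro i
    have := hlaw (Pi.single i 1)
    simpa [Pi.single_apply, hdiag] using this
  have hX0 : ∀ j, ∫ ω, X j ω = 0 := fun j => by
    have : ∫ ω, X j ω = ∫ x, x ∂(Measure.map (X j) ℙ) :=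
      (integral_map (hXm j).aemeasurable aestronglyMeasurable_id).symm
    rw [this, hlaw1, integral_id_gaussianReal]
  have hvar1 : ∀ j, Var[X j; ℙ] = 1 := fun j => by
    have : Var[X j; ℙ] = Var[id; Measure.map (X j) ℙ] := by
      rw [variance_map aemeasurable_id (hXm j).aemeasurable]; rfl
    rw [this, hlaw1, variance_id_gaussianReal]; simp
  have hcovself : ∀ j, cov[X j, X j; ℙ] = 1 := fun j => by
    rw [covariance_self (hXm j).aemeasurable, hvar1]
  have hcov : ∀ i j, i ≠ j → cov[X i, X j; ℙ] = (R i j + R j i) / 2 := by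
    intro i j hij
    have h1 := hvarlin (Pi.single i 1 + Pi.single j 1)
    have e1 : (fun ω => ∑ k, (Pi.single i 1 + Pi.single j 1 : Fin n → ℝ) k * X k ω)
        = X i + X j := by
      ext ω
      simp [add_mul, Finset.sum_add_distrib, Pi.single_apply]
    have e2 : ∑ k, ∑ l, (Pi.single i 1 + Pi.single j 1 : Fin n → ℝ) k * R k l
        * (Pi.single i 1 + Pi.single j 1 : Fin n → ℝ) l = 2 + (R i j + R j i) := by
      simp [add_mul, mul_add, Finset.sum_add_distrib, Pi.single_apply, hdiag]
      ring
    rw [e1, e2, variance_add (hX2 i) (hX2 j), hvar1, hvar1, max_eq_left] at h1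
    · linarith
    · have a1 := (abs_le.1 (hR i j hij)).1
      have a2 := (abs_le.1 (hR j i hij.symm)).1
      linarith
  let σ : Bool → ℝ := fun b => if b then 1 else -1
  let V : Bool × Fin n → Ω → ℝ := fun p ω => σ p.1 * X p.2 ω
  have hVcov : ∀ p q, cov[V p, V q; ℙ] = σ p.1 * (σ q.1 * cov[X p.2, X q.2; ℙ]) := by
    intro p q
    simp only [V, covariance_const_mul_left, covariance_const_mul_right]
    ring
  have hVm : ∀ p, Measurable (V p) := fun p => (hXm p.2).const_mul _
  have hVG : HasGaussianLaw (fun ω p => V p ω) (ℙ : Measure Ω) := by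
    let T : (Fin n → ℝ) →L[ℝ] (Bool × Fin n → ℝ) :=
      .pi fun p => σ p.1 • (.proj p.2 : (Fin n → ℝ) →L[ℝ] ℝ)
    exact hXG.map_fun T
  have hV0 : ∀ p, ∫ ω, V p ω = 0 := fun p => by
    simp only [V]; rw [integral_const_mul, hX0, mul_zero]
  have hmain := equi_bound ρ hρ0 hρ1 hVG hVm hV0
    (fun p => by rw [hVcov, hcovself]; rcases p with ⟨b, i⟩; cases b <;> simp [σ])
    (fun p q hpq => by
      rw [hVcov]
      rcases p with ⟨b, i⟩
      rcases q with ⟨c, j⟩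
      by_cases hij : i = j
      · subst hij
        simp only [hcovself]
        have hbc : b ≠ c := fun h => hpq (by rw [h])
        cases b <;> cases c <;> simp [σ] at hbc ⊢ <;> linarith
      · simp only [hcov i j hij]
        have a1 := abs_le.1 (hR i j hij)
        have a2 := abs_le.1 (hR j i (Ne.symm hij))
        cases b <;> cases c <;> simp [σ] <;> linarith [a1.1, a1.2, a2.1, a2.2]) t
  have hcard : Fintype.card (Bool × Fin n) = 2 * n := by simp
  rw [hcard] at hmain
  refine le_trans (measure_mono fun ω hω => ?_) hmain
  intro p
  have hb : |X p.2 ω| ≤ t :=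
    (le_ciSup (f := fun i => |X i ω|) (Set.finite_range _).bddAbove p.2).trans hω
  have := abs_le.1 hb
  rcases p with ⟨b, i⟩
  simp only at this
  cases b <;> simp [V, σ] <;> linarith [this.1, this.2]

/-- constant in the lower Mills bound -/
noncomputable def millsK : ℝ := (√(2 * π))⁻¹ * Real.exp (-(3 / 2))

theorem millsK_pos : 0 < millsK := by unfold millsK; positivity

theorem mills_lower_s7 {u L : ℝ} (hu : 0 ≤ u) (huL : u ≤ L) (hL : 1 ≤ L) :
    ENNReal.ofReal (millsK / L * Real.exp (-u ^ 2 / 2)) ≤ gaussianReal 0 1 (Set.Ioi u) := by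
  have hL0 : 0 < L := by linarith
  calc ENNReal.ofReal (millsK / L * Real.exp (-u ^ 2 / 2))
      = ∫⁻ _ in Set.Ioc u (u + 1 / L), ENNReal.ofReal (millsK * Real.exp (-u ^ 2 / 2)) := by
        rw [setLIntegral_const, Real.volume_Ioc, ← ENNReal.ofReal_mul (by have := millsK_pos; positivity)]
        congr 1; field_simp; ring
    _ ≤ ∫⁻ y in Set.Ioc u (u + 1 / L), gaussianPDF 0 1 y := by
        refine setLIntegral_mono (measurable_gaussianPDF 0 1) fun y hy => ?_
        rw [gaussianPDF_def]
        refine ENNReal.ofReal_le_ofReal ?_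
        simp only [gaussianPDFReal_def, millsK, NNReal.coe_one, mul_one, sub_zero]
        rw [mul_assoc, ← Real.exp_add]
        gcongr
        have h1 : u / L ≤ 1 := by rw [div_le_one hL0]; exact huL
        have h2 : 1 / L ≤ 1 := by rw [div_le_one hL0]; exact hL
        have h3 : 0 < 1 / L := by positivity
        have h4 : y ^ 2 ≤ (u + 1 / L) ^ 2 := by
          have := hy.1; have := hy.2
          have h0 : 0 ≤ y := by linarith
          gcongr
        have h5 : (u + 1 / L) ^ 2 = u ^ 2 + 2 * (u / L) + (1 / L) * (1 / L) := by field_simp; ring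
        nlinarith
    _ = gaussianReal 0 1 (Set.Ioc u (u + 1 / L)) := by
        rw [gaussianReal_apply 0 one_ne_zero]
    _ ≤ _ := measure_mono fun y hy => hy.1

theorem Phi_pow_le (N : ℕ) {u r : ℝ} (hr : 0 ≤ r)
    (h : ENNReal.ofReal r ≤ gaussianReal 0 1 (Set.Ioi u)) :
    gaussianReal 0 1 (Set.Iic u) ^ N ≤ ENNReal.ofReal (Real.exp (-(N * r))) := by
  have e1 : gaussianReal 0 1 (Set.Iic u) = 1 - gaussianReal 0 1 (Set.Ioi u) := by
    rw [← Set.compl_Ioi, prob_compl_eq_one_sub measurableSet_Ioi]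
  have e2 : gaussianReal 0 1 (Set.Iic u) ≤ ENNReal.ofReal (Real.exp (-r)) := by
    rw [e1]
    calc _ ≤ 1 - ENNReal.ofReal r := tsub_le_tsub_left h 1
      _ = ENNReal.ofReal (1 - r) := by rw [ENNReal.ofReal_sub _ hr, ENNReal.ofReal_one]
      _ ≤ _ := ENNReal.ofReal_le_ofReal (by have := Real.add_one_le_exp (-r); linarith)
  calc _ ≤ ENNReal.ofReal (Real.exp (-r)) ^ N := by gcongr
    _ = _ := by
      rw [← ENNReal.ofReal_pow (Real.exp_pos _).le, ← Real.exp_nat_mul]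
      congr 2; ring

theorem Phi_pow_neg (N : ℕ) {u : ℝ} (hu : u ≤ 0) :
    gaussianReal 0 1 (Set.Iic u) ^ N ≤ ENNReal.ofReal (Real.exp (-(millsK * N))) := by
  have h := mills_lower_s7 (le_refl (0:ℝ)) zero_le_one le_rfl
  simp only [div_one, ne_eq, OfNat.ofNat_ne_zero, not_false_eq_true, zero_pow, neg_zero, zero_div,
    Real.exp_zero, mul_one] at h
  refine (Phi_pow_le N millsK_pos.le (h.trans (measure_mono (Set.Ioi_subset_Ioi hu)))).trans ?_
  rw [mul_comm]

theorem exp_neg_le_fact (m : ℕ) {y : ℝ} (hy : 0 < y) :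
    Real.exp (-y) ≤ m.factorial / y ^ m := by
  have h := Real.pow_div_factorial_le_exp y hy.le m
  have hf : (0:ℝ) < m.factorial := by exact_mod_cast m.factorial_pos
  rw [Real.exp_neg, inv_eq_one_div, div_le_div_iff₀ (Real.exp_pos _) (by positivity)]
  rw [div_le_iff₀ hf] at h
  linarith

/-- middle range bound. `l = log log N`, `q = l/(2L)`. -/
theorem Phi_pow_mid (N : ℕ) (m : ℕ) {L l u v : ℝ} (hL1 : 1 ≤ L) (hN : (N : ℝ) = Real.exp (L ^ 2 / 2))
    (hl : Real.exp (l / 2) = L / √2) (hl0 : 0 ≤ l) (hl2 : l ^ 2 ≤ 2 * L ^ 2) (hq : l / (2 * L) ≤ L / 2)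
    (hu : 0 ≤ u) (hv : 0 ≤ v) (huv : u = L - l / (2 * L) - v) :
    gaussianReal 0 1 (Set.Iic u) ^ N ≤
      ENNReal.ofReal (m.factorial / (millsK * Real.exp (-(1 / 4)) / √2) ^ m
        * Real.exp (-(m * (v * L / 4)))) := by
  have hL0 : 0 < L := by linarith
  have hK := millsK_pos
  have hq0 : 0 ≤ l / (2 * L) := by positivity
  have huL : u ≤ L := by linarith
  have h1 := Phi_pow_le N (by positivity) (mills_lower_s7 hu huL hL1)
  refine h1.trans (ENNReal.ofReal_le_ofReal ?_)
  set q := l / (2 * L) with hqd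
  have hqL : q * L = l / 2 := by rw [hqd]; field_simp
  have hq2 : q ^ 2 ≤ 1 / 2 := by
    rw [hqd, div_pow, div_le_iff₀ (by positivity)]; nlinarith
  set k := millsK * Real.exp (-(1 / 4)) / √2 with hk
  have hkpos : 0 < k := by positivity
  have key : k * Real.exp (v * L / 4) ≤ N * (millsK / L * Real.exp (-u ^ 2 / 2)) := by
    have e : N * (millsK / L * Real.exp (-u ^ 2 / 2))
        = millsK / L * Real.exp (L ^ 2 / 2 + -u ^ 2 / 2) := by
      rw [hN, Real.exp_add]; ring
    have e' : k * Real.exp (v * L / 4)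
        = millsK / L * Real.exp (-(1/4) + l / 2 + v * L / 4) := by
      rw [Real.exp_add, Real.exp_add, hl, hk]; field_simp
    rw [e, e']
    have hvL : 0 ≤ v * (L - q - v) := mul_nonneg hv (by linarith)
    have hvq : 0 ≤ v * (L / 2 - q) := mul_nonneg hv (by linarith)
    have : -(1/4) + l / 2 + v * L / 4 ≤ L ^ 2 / 2 + -u ^ 2 / 2 := by
      rw [huv]
      nlinarith
    exact mul_le_mul_of_nonneg_left (Real.exp_le_exp.2 this) (by positivity)
  calc Real.exp (-(N * (millsK / L * Real.exp (-u ^ 2 / 2))))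
      ≤ Real.exp (-(k * Real.exp (v * L / 4))) := by gcongr
    _ ≤ m.factorial / (k * Real.exp (v * L / 4)) ^ m := exp_neg_le_fact m (by positivity)
    _ = _ := by
      rw [mul_pow, ← Real.exp_nat_mul, Real.exp_neg]
      field_simp

theorem integral_exp_abs {x : ℝ} (hx : 0 < x) :
    ∫ z : ℝ, Real.exp (-(x * |z - x|)) = 2 / x := by
  rw [integral_sub_right_eq_self (fun z => Real.exp (-(x * |z|))) x,
    integral_comp_abs (f := fun z => Real.exp (-(x * z)))]
  have := integral_exp_mul_Ioi (a := -x) (by linarith) 0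
  simp only [neg_mul] at this
  rw [this]
  simp; ring

theorem lintegral_exp_abs {x : ℝ} (hx : 0 < x) :
    ∫⁻ z : ℝ, ENNReal.ofReal (Real.exp (-(x * |z - x|))) = ENNReal.ofReal (2 / x) := by
  rw [← integral_exp_abs hx, ofReal_integral_eq_lintegral_ofReal]
  · by_contra h
    have h1 := integral_undef h
    have h2 := integral_exp_abs hx
    rw [h1] at h2
    have : 0 < 2 / x := by positivity
    linarith
  · exact Filter.Eventually.of_forall fun z => (Real.exp_pos _).le

theorem lintegral_min {x : ℝ} (hx : 0 < x) :
    ∫⁻ z, ENNReal.ofReal (min 1 (Real.exp (-(2 * x * (x - z))))) ∂(gaussianReal 0 1)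
      ≤ ENNReal.ofReal (Real.exp (-x ^ 2 / 2) * (2 / x)) := by
  rw [gaussianReal_of_var_ne_zero 0 one_ne_zero,
    lintegral_withDensity_eq_lintegral_mul _ (measurable_gaussianPDF 0 1) (by fun_prop)]
  rw [ENNReal.ofReal_mul (Real.exp_pos _).le, ← lintegral_exp_abs hx,
    ← lintegral_const_mul _ (by fun_prop)]
  refine lintegral_mono fun z => ?_
  simp only [Pi.mul_apply]
  rw [gaussianPDF_def, ← ENNReal.ofReal_mul (gaussianPDFReal_nonneg 0 1 z),
    ← ENNReal.ofReal_mul (Real.exp_pos _).le]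
  refine ENNReal.ofReal_le_ofReal ?_
  simp only [gaussianPDFReal_def, NNReal.coe_one, mul_one, sub_zero]
  have hs : (√(2 * π))⁻¹ ≤ 1 := by
    apply inv_le_one_of_one_le₀
    rw [Real.one_le_sqrt]
    have := Real.pi_gt_three; linarith
  have h0 : 0 ≤ min 1 (Real.exp (-(2 * x * (x - z)))) := le_min zero_le_one (Real.exp_pos _).le
  have h1 : Real.exp (-z ^ 2 / 2) * min 1 (Real.exp (-(2 * x * (x - z))))
      ≤ Real.exp (-x ^ 2 / 2) * Real.exp (-(x * |z - x|)) := by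
    rcases le_total z x with h | h
    · refine (mul_le_mul_of_nonneg_left (min_le_right _ _) (Real.exp_pos _).le).trans ?_
      rw [← Real.exp_add, ← Real.exp_add, abs_of_nonpos (by linarith)]
      refine Real.exp_le_exp.2 ?_
      nlinarith [sq_nonneg (z - x)]
    · refine (mul_le_mul_of_nonneg_left (min_le_left _ _) (Real.exp_pos _).le).trans ?_
      rw [← Real.exp_add, mul_one, abs_of_nonneg (by linarith)]
      refine Real.exp_le_exp.2 ?_
      nlinarith [sq_nonneg (z - x)]
  calc _ = (√(2 * π))⁻¹ * (Real.exp (-z ^ 2 / 2) * min 1 (Real.exp (-(2 * x * (x - z))))) := by ring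
    _ ≤ 1 * (Real.exp (-z ^ 2 / 2) * min 1 (Real.exp (-(2 * x * (x - z))))) :=
        mul_le_mul_of_nonneg_right hs (mul_nonneg (Real.exp_pos _).le h0)
    _ ≤ _ := by rw [one_mul]; exact h1

/-- core estimate -/
theorem core_bound (N m : ℕ) {L l x c δ M : ℝ} (hL1 : 1 ≤ L) (hN : (N : ℝ) = Real.exp (L ^ 2 / 2))
    (hl : Real.exp (l / 2) = L / √2) (hl0 : 0 ≤ l) (hl2 : l ^ 2 ≤ 2 * L ^ 2) (hq : l / (2 * L) ≤ L / 2)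
    (hc : 0 < c) (hx0 : 0 < x) (hx : c * x = L - l / (2 * L) - δ * L)
    (hm : 2 * x ≤ m * c * L / 4) (hM1 : 1 ≤ M)
    (hM : m.factorial / (millsK * Real.exp (-(1 / 4)) / √2) ^ m ≤ M) :
    ∫⁻ z, gaussianReal 0 1 (Set.Iic (δ * L + c * z)) ^ N ∂(gaussianReal 0 1)
      ≤ ENNReal.ofReal (Real.exp (-(millsK * N)) + M * (Real.exp (-x ^ 2 / 2) * (2 / x))) := by
  have hpt : ∀ z : ℝ, gaussianReal 0 1 (Set.Iic (δ * L + c * z)) ^ N ≤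
      ENNReal.ofReal (Real.exp (-(millsK * N)))
        + ENNReal.ofReal M * ENNReal.ofReal (min 1 (Real.exp (-(2 * x * (x - z))))) := by
    intro z
    rcases le_total (δ * L + c * z) 0 with h | h
    · exact (Phi_pow_neg N h).trans le_self_add
    refine le_trans ?_ le_add_self
    rw [← ENNReal.ofReal_mul (by linarith)]
    rcases le_total x z with hz | hz
    · calc _ ≤ (1 : ENNReal) ^ N := by gcongr; exact prob_le_one
        _ = ENNReal.ofReal 1 := by simp
        _ ≤ _ := by
          refine ENNReal.ofReal_le_ofReal ?_
          rw [min_eq_left, mul_one]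
          · exact hM1
          · rw [Real.one_le_exp_iff]; nlinarith
    · refine (Phi_pow_mid N m hL1 hN hl hl0 hl2 hq h (v := c * (x - z))
        (mul_nonneg hc.le (by linarith)) (by linarith)).trans (ENNReal.ofReal_le_ofReal ?_)
      have hk : 0 ≤ 2 * x * (x - z) := mul_nonneg (by linarith) (by linarith)
      rw [min_eq_right (by rw [Real.exp_le_one_iff]; linarith)]
      have : 2 * x * (x - z) ≤ m * (c * (x - z) * L / 4) := by
        have := mul_le_mul_of_nonneg_right hm (sub_nonneg.2 hz)
        linarith
      gcongr
  calc _ ≤ ∫⁻ z, (ENNReal.ofReal (Real.exp (-(millsK * N)))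
        + ENNReal.ofReal M * ENNReal.ofReal (min 1 (Real.exp (-(2 * x * (x - z))))))
          ∂(gaussianReal 0 1) := lintegral_mono hpt
    _ = ENNReal.ofReal (Real.exp (-(millsK * N))) + ENNReal.ofReal M *
        ∫⁻ z, ENNReal.ofReal (min 1 (Real.exp (-(2 * x * (x - z))))) ∂(gaussianReal 0 1) := by
        rw [lintegral_add_left measurable_const, lintegral_const, measure_univ, mul_one,
          lintegral_const_mul _ (by fun_prop)]
    _ ≤ ENNReal.ofReal (Real.exp (-(millsK * N))) + ENNReal.ofReal M *
        ENNReal.ofReal (Real.exp (-x ^ 2 / 2) * (2 / x)) := by gcongr; exact lintegral_min hx0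
    _ = _ := by
        rw [← ENNReal.ofReal_mul (by linarith), ← ENNReal.ofReal_add (Real.exp_pos _).le]
        exact mul_nonneg (by linarith) (by positivity)

set_option maxHeartbeats 2000000 in
theorem large_bound (δ c : ℝ) (hδ0 : 0 < δ) (hδ1 : δ < 1) (hc : 0 < c) :
    ∃ C : ℝ, 0 < C ∧ ∃ N0 : ℕ, ∀ N : ℕ, 4 ≤ N → N0 ≤ N →
      ∫⁻ z, gaussianReal 0 1 (Set.Iic (δ * √(2 * Real.log N) + c * z)) ^ N ∂(gaussianReal 0 1)
      ≤ ENNReal.ofReal (C * (Real.exp (-((1 - δ) ^ 2 / c ^ 2) * Real.log N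
          + ((1 - δ) / c ^ 2 - 1) / 2 * Real.log (Real.log N)))) := by
  set α := (1 - δ) ^ 2 / c ^ 2 with hα
  set β := (1 - δ) / c ^ 2 with hβ
  have hd : 0 < 1 - δ := by linarith
  have hβ0 : 0 < β := by positivity
  set m := ⌈8 * β⌉₊ with hm
  set M := max 1 (m.factorial / (millsK * Real.exp (-(1 / 4)) / √2) ^ m) with hM
  have hM1 : 1 ≤ M := le_max_left _ _
  refine ⟨1 + M * (4 * c / (1 - δ)), by positivity, ?_⟩
  have ev1 : ∀ᶠ N : ℕ in Filter.atTop, Real.exp (-(millsK * N)) ≤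
      Real.exp (-(α + 1 / 2) * Real.log N) := by
    have h := tendsto_rpow_mul_exp_neg_mul_atTop_nhds_zero (α + 1 / 2) millsK millsK_pos
    have h2 := (h.comp tendsto_natCast_atTop_atTop).eventually (ge_mem_nhds zero_lt_one)
    filter_upwards [h2, Filter.eventually_ge_atTop 1] with N hN hN1
    have hNp : (0:ℝ) < N := by exact_mod_cast hN1
    simp only [Function.comp] at hN
    rw [Real.rpow_def_of_pos hNp, ← Real.exp_add, Real.exp_le_one_iff] at hN
    exact Real.exp_le_exp.2 (by linarith)
  have ev2 : ∀ᶠ N : ℕ in Filter.atTop,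
      Real.log (Real.log N) ≤ (1 - δ) * Real.log N := by
    have h := Real.isLittleO_log_id_atTop.bound hd
    have h2 := (Real.tendsto_log_atTop.comp tendsto_natCast_atTop_atTop).eventually h
    filter_upwards [h2, Filter.eventually_ge_atTop 1] with N hN hN1
    have hNp : (1:ℝ) ≤ N := by exact_mod_cast hN1
    simp only [Function.comp, id, Real.norm_eq_abs] at hN
    rw [abs_of_nonneg (Real.log_nonneg hNp)] at hN
    exact (le_abs_self _).trans hN
  obtain ⟨N0, hN0⟩ := Filter.eventually_atTop.1 (ev1.and ev2)
  refine ⟨N0, fun N hN4 hN => ?_⟩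
  obtain ⟨h1, h2⟩ := hN0 N hN
  have hNp : (0:ℝ) < N := by
    have : 0 < N := by omega
    exact_mod_cast this
  set y := Real.log N with hy
  have hy1 : 1 ≤ y := by
    rw [hy, Real.le_log_iff_exp_le hNp]
    have h4 : (4:ℝ) ≤ N := by exact_mod_cast hN4
    have := Real.exp_one_lt_d9
    linarith
  have hy0 : 0 < y := by linarith
  set l := Real.log y with hl
  have hl0 : 0 ≤ l := Real.log_nonneg hy1
  have hly : l ≤ y := by have := Real.log_le_sub_one_of_pos hy0; linarith
  set L := √(2 * y) with hL
  have hL2 : L ^ 2 = 2 * y := Real.sq_sqrt (by positivity)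
  have hL1 : 1 ≤ L := by rw [hL, Real.one_le_sqrt]; linarith
  have hL0 : 0 < L := by linarith
  have hLs : L = √2 * √y := by rw [hL, Real.sqrt_mul (by norm_num)]
  have hsl : Real.exp (l / 2) = √y := by
    rw [Real.sqrt_eq_rpow, Real.rpow_def_of_pos hy0]; congr 1; rw [← hl]; ring
  have hle : Real.exp (l / 2) = L / √2 := by
    rw [hsl, hLs]; field_simp
  have hLge : Real.exp (l / 2) ≤ L := by
    rw [hle]; apply div_le_self hL0.le
    rw [Real.one_le_sqrt]; norm_num
  have hl2 : l ^ 2 ≤ 2 * L ^ 2 := by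
    have : l / 2 ≤ √y := by
      rw [← hsl]; have := Real.add_one_le_exp (l / 2); linarith
    have h3 : l ^ 2 ≤ (2 * √y) ^ 2 := by gcongr; linarith
    rw [mul_pow, Real.sq_sqrt hy0.le] at h3
    rw [hL2]; linarith
  have hq' : l / (2 * L) ≤ (1 - δ) * L / 2 := by
    rw [div_le_iff₀ (by positivity)]; nlinarith
  have hq : l / (2 * L) ≤ L / 2 := by nlinarith
  have hq0 : 0 ≤ l / (2 * L) := by positivity
  set q := l / (2 * L) with hqd
  have hqL : q * L = l / 2 := by rw [hqd]; field_simp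
  set x := (L - q - δ * L) / c with hx
  have hcx : c * x = L - q - δ * L := by rw [hx]; field_simp
  have hxl : (1 - δ) * L / (2 * c) ≤ x := by
    rw [hx, div_le_div_iff₀ (by positivity) hc]; nlinarith
  have hxp : 0 < (1 - δ) * L / (2 * c) := by positivity
  have hx0 : 0 < x := hxp.trans_le hxl
  have hxu : c * x ≤ (1 - δ) * L := by linarith
  have hm' : 2 * x ≤ m * c * L / 4 := by
    have h8 : 8 * β ≤ m := Nat.le_ceil _
    have h9 : β * c ^ 2 = 1 - δ := by rw [hβ]; field_simp
    have h10 : x ≤ β * c * L := by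
      rw [← h9] at hxu
      have : c * x ≤ c * (β * c * L) := by linarith
      exact le_of_mul_le_mul_left this hc
    have h11 : 8 * β * (c * L) ≤ m * (c * L) := by gcongr
    linarith
  have hNe : (N : ℝ) = Real.exp (L ^ 2 / 2) := by
    rw [hL2, mul_div_cancel_left₀ _ (by norm_num), hy, Real.exp_log hNp]
  refine (core_bound N m hL1 hNe hle hl0 hl2 hq hc hx0 hcx hm' hM1 (le_max_right _ _)).trans
    (ENNReal.ofReal_le_ofReal ?_)
  have p1 : Real.exp (-(millsK * N)) ≤ Real.exp (-α * y + (β - 1) / 2 * l) := by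
    refine h1.trans (Real.exp_le_exp.2 ?_)
    nlinarith
  have p2 : Real.exp (-x ^ 2 / 2) ≤ Real.exp (-α * y + β / 2 * l) := by
    refine Real.exp_le_exp.2 ?_
    have : (c * x) ^ 2 ≥ (1 - δ) ^ 2 * L ^ 2 - (1 - δ) * l := by
      rw [hcx]; nlinarith [sq_nonneg q]
    have hx2 : x ^ 2 ≥ ((1 - δ) ^ 2 * L ^ 2 - (1 - δ) * l) / c ^ 2 := by
      rw [ge_iff_le, div_le_iff₀ (by positivity)]; linarith
    have e : ((1 - δ) ^ 2 * L ^ 2 - (1 - δ) * l) / c ^ 2 = 2 * α * y - β * l := by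
      rw [hL2, hα, hβ]; ring
    rw [e] at hx2
    linarith
  have p3 : 2 / x ≤ 4 * c / (1 - δ) * Real.exp (-(l / 2)) := by
    calc 2 / x ≤ 2 / ((1 - δ) * L / (2 * c)) := by gcongr
      _ = 4 * c / (1 - δ) * (1 / L) := by field_simp; ring
      _ ≤ _ := by
        rw [Real.exp_neg, ← one_div]
        gcongr
  calc _ ≤ Real.exp (-α * y + (β - 1) / 2 * l) + M * (Real.exp (-α * y + β / 2 * l)
          * (4 * c / (1 - δ) * Real.exp (-(l / 2)))) := by gcongr
    _ = _ := by
      have : Real.exp (-α * y + (β - 1) / 2 * l)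
          = Real.exp (-α * y + β / 2 * l) * Real.exp (-(l / 2)) := by
        rw [← Real.exp_add]; congr 1; ring
      rw [this]; ring

theorem all_bound (δ c : ℝ) (hδ0 : 0 < δ) (hδ1 : δ < 1) (hc : 0 < c) :
    ∃ C : ℝ, 0 < C ∧ ∀ N : ℕ, 4 ≤ N →
      ∫⁻ z, gaussianReal 0 1 (Set.Iic (δ * √(2 * Real.log N) + c * z)) ^ N ∂(gaussianReal 0 1)
      ≤ ENNReal.ofReal (C * (Real.exp (-((1 - δ) ^ 2 / c ^ 2) * Real.log N
          + ((1 - δ) / c ^ 2 - 1) / 2 * Real.log (Real.log N)))) := by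
  obtain ⟨C, hC, N0, h⟩ := large_bound δ c hδ0 hδ1 hc
  set f : ℕ → ℝ := fun N => -((1 - δ) ^ 2 / c ^ 2) * Real.log N
          + ((1 - δ) / c ^ 2 - 1) / 2 * Real.log (Real.log N) with hf
  have hS : 0 ≤ ∑ N ∈ Finset.range N0, Real.exp (-f N) :=
    Finset.sum_nonneg fun _ _ => (Real.exp_pos _).le
  refine ⟨C + ∑ N ∈ Finset.range N0, Real.exp (-f N), by positivity, fun N hN => ?_⟩
  rcases le_or_gt N0 N with h0 | h0
  · refine (h N hN h0).trans (ENNReal.ofReal_le_ofReal ?_)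
    gcongr
    linarith
  · calc _ ≤ ∫⁻ z, (1 : ENNReal) ∂(gaussianReal 0 1) := by
          refine lintegral_mono fun z => ?_
          exact pow_le_one' prob_le_one N
      _ = ENNReal.ofReal 1 := by simp
      _ ≤ _ := by
          refine ENNReal.ofReal_le_ofReal ?_
          have h1 : Real.exp (-f N) ≤ ∑ N ∈ Finset.range N0, Real.exp (-f N) :=
            Finset.single_le_sum (f := fun N => Real.exp (-f N)) (fun _ _ => (Real.exp_pos _).le)
              (Finset.mem_range.2 h0)
          calc (1:ℝ) = Real.exp (-f N) * Real.exp (f N) := by rw [← Real.exp_add]; simp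
            _ ≤ _ := by
              apply mul_le_mul_of_nonneg_right _ (Real.exp_pos _).le
              linarith

theorem small_ball_upper_bound (δ₀ ρ₀ : ℝ)
    (hδ : δ₀ ∈ Set.Ioo (0 : ℝ) 1) (hρ : ρ₀ ∈ Set.Ioo (0 : ℝ) 1) :
    ∃ C : ℝ, 0 < C ∧
      ∀ (Ω : Type) [MeasureSpace Ω], IsProbabilityMeasure (ℙ : Measure Ω) →
        ∀ (n : ℕ), 2 ≤ n →
          ∀ (X : Fin n → Ω → ℝ) (R : Matrix (Fin n) (Fin n) ℝ),
            IsCenteredGaussianVec X R →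
            (∀ i j, i ≠ j → |R i j| ≤ ρ₀) →
            (ℙ : Measure Ω) {ω | (⨆ i, |X i ω|)
                ≤ δ₀ * Real.sqrt (2 * (1 - ρ₀) * Real.log (2 * n))}
              ≤ ENNReal.ofReal
                  (C * (2 * (n : ℝ)) ^ (-((1 - ρ₀) * (1 - δ₀) ^ 2 / ρ₀))
                    * Real.log (2 * (n : ℝ)) ^ (((1 - ρ₀) * (1 - δ₀) / ρ₀ - 1) / 2)) := by
  obtain ⟨hδ0, hδ1⟩ := hδ
  obtain ⟨hρ0, hρ1⟩ := hρ
  have h1ρ : 0 < 1 - ρ₀ := by linarith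
  have hs1 : 0 < √(1 - ρ₀) := Real.sqrt_pos.2 h1ρ
  obtain ⟨C, hC, h⟩ := all_bound δ₀ (√ρ₀ / √(1 - ρ₀)) hδ0 hδ1 (by positivity)
  refine ⟨C, hC, ?_⟩
  intro Ω _ hP n hn X R hX hR
  refine (small_ball_le ρ₀ hρ0 hρ1 hX hR _).trans ?_
  have hb := h (2 * n) (by omega)
  have hc2 : (√ρ₀ / √(1 - ρ₀)) ^ 2 = ρ₀ / (1 - ρ₀) := by
    rw [div_pow, Real.sq_sqrt hρ0.le, Real.sq_sqrt h1ρ.le]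
  rw [hc2] at hb
  push_cast at hb
  have hn' : (4:ℝ) ≤ 2 * n := by
    have : (2:ℝ) ≤ n := by exact_mod_cast hn
    linarith
  have hlog : 0 < Real.log (2 * n) := Real.log_pos (by linarith)
  refine le_of_eq_of_le ?_ (hb.trans_eq ?_)
  · refine lintegral_congr fun z => ?_
    congr 3
    rw [mul_right_comm, Real.sqrt_mul (by positivity) (1 - ρ₀)]
    field_simp
  · symm
    rw [mul_assoc, Real.rpow_def_of_pos (by linarith), Real.rpow_def_of_pos hlog, ← Real.exp_add]
    congr 3
    field_simp
end
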